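/- arXiv:1611.09719 — 3 statements merged into one kernel-verified Lean document; each statement's English description precedes it below -/
import Mathlib

section
/- Let α ∈ ℝ, γ ≥ 0, C > 0, let r ∈ ℕ satisfy r > |α|, and let δ > 0 be such that γ − δ < −1. Let (ζ_x)_{x∈ℝ} be a family of tempered distributions on ℝ such that |⟨ζ_x, φ_x^λ⟩| ≤ C λ^α for all x ∈ ℝ, λ ∈ (0,1] and φ ∈ B^r_0, and |⟨ζ_x − ζ_y, φ_x^λ⟩| ≤ C λ^{α−γ} |x−y|^γ for all λ ∈ (0,1], φ ∈ B^r_0 and x, y ∈ ℝ with |x−y| ≥ λ. Then for every Schwartz function ψ ∈ 𝒮(ℝ) there is a constant C′, depending only on α, γ, δ, r and on sup_{0≤j≤r} sup_{x∈ℝ} (1+|x|)^δ |ψ^{(j)}(x)| (in particular not on ζ, C, x or λ), such that |⟨ζ_x, ψ_x^λ⟩| ≤ C′ C λ^α for all x ∈ ℝ and λ ∈ (0,1], where ψ_x^λ(y) := λ^{−1} ψ(λ^{−1}(y−x)). -/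
open Real

noncomputable section

/-- `φ ∈ B^r_0`: a smooth function supported in `[-1,1]` whose derivatives up to
order `r` are bounded by `1`. -/
def IsTestFunction (r : ℕ) (φ : ℝ → ℝ) : Prop :=
  ContDiff ℝ (⊤ : ℕ∞) φ ∧ (∀ y : ℝ, y ∉ Set.Icc (-1 : ℝ) 1 → φ y = 0) ∧
    ∀ j ≤ r, ∀ y : ℝ, |iteratedDeriv j φ y| ≤ 1

open Filter Topology

lemma aux_prod_bound {f g : ℝ → ℝ} (hf : ContDiff ℝ (⊤ : ℕ∞) f) (hg : ContDiff ℝ (⊤ : ℕ∞) g)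
    (n : ℕ) (x a b : ℝ) (ha : ∀ i ≤ n, |iteratedDeriv i f x| ≤ a)
    (hb : ∀ i ≤ n, |iteratedDeriv i g x| ≤ b) :
    |iteratedDeriv n (fun y => f y * g y) x| ≤ 2 ^ n * (a * b) := by
  have ha0 : 0 ≤ a := (abs_nonneg _).trans (ha 0 (Nat.zero_le _))
  have h := norm_iteratedFDeriv_mul_le (𝕜 := ℝ) hf hg x (n := n) (by exact_mod_cast le_top)
  simp only [norm_iteratedFDeriv_eq_norm_iteratedDeriv, Real.norm_eq_abs] at h
  refine h.trans ?_
  calc _ ≤ ∑ i ∈ Finset.range (n + 1), (n.choose i : ℝ) * (a * b) := by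
        refine Finset.sum_le_sum fun i hi => ?_
        rw [mul_assoc]
        have hi' : i ≤ n := by simpa [Nat.lt_succ_iff] using hi
        gcongr
        · exact ha i hi'
        · exact hb _ (Nat.sub_le _ _)
    _ = 2 ^ n * (a * b) := by
        rw [← Finset.sum_mul]
        congr 1
        exact_mod_cast Nat.sum_range_choose n

lemma aux_s_smooth : ContDiff ℝ (⊤ : ℕ∞) smoothTransition := smoothTransition.contDiff

lemma aux_s_bound (n : ℕ) : ∃ B : ℝ, ∀ x, |iteratedDeriv n smoothTransition x| ≤ B := by
  have hc : Continuous (iteratedDeriv n smoothTransition) :=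
    aux_s_smooth.continuous_iteratedDeriv n (by exact_mod_cast le_top)
  obtain ⟨B, hB⟩ := (isCompact_Icc (a := (0 : ℝ)) (b := 1)).exists_bound_of_continuousOn
    hc.continuousOn
  have hk : ∀ c : ℝ, |c| ≤ 1 → ∀ x, smoothTransition =ᶠ[𝓝 x] (fun _ => c) →
      |iteratedDeriv n smoothTransition x| ≤ 1 := by
    intro c hc x hx
    rw [hx.iteratedDeriv_eq, iteratedDeriv_const]
    split_ifs <;> simp [hc]
  refine ⟨max B 1, fun x => ?_⟩
  by_cases h0 : x < 0
  · refine (hk 0 (by simp) x ?_).trans (le_max_right _ _)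
    filter_upwards [Iio_mem_nhds h0] with y hy
    exact smoothTransition.zero_of_nonpos (le_of_lt hy)
  by_cases h1 : 1 < x
  · refine (hk 1 (by simp) x ?_).trans (le_max_right _ _)
    filter_upwards [Ioi_mem_nhds h1] with y hy
    exact smoothTransition.one_of_one_le (le_of_lt hy)
  exact (hB x ⟨not_lt.1 h0, not_lt.1 h1⟩).trans (le_max_left _ _)

/-- difference of two translates -/
def auxDiff (a b : ℝ) (x : ℝ) : ℝ := smoothTransition (x + a) - smoothTransition (x + b)

lemma auxDiff_smooth (a b : ℝ) : ContDiff ℝ (⊤ : ℕ∞) (auxDiff a b) := by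
  unfold auxDiff
  exact (aux_s_smooth.comp (contDiff_id.add contDiff_const)).sub
    (aux_s_smooth.comp (contDiff_id.add contDiff_const))

lemma auxDiff_bound (n : ℕ) :
    ∃ B : ℝ, 0 < B ∧ ∀ a b x, |iteratedDeriv n (auxDiff a b) x| ≤ B := by
  obtain ⟨B, hB⟩ := aux_s_bound n
  have hB0 : 0 ≤ B := (abs_nonneg _).trans (hB 0)
  refine ⟨2 * B + 1, by positivity, fun a b x => ?_⟩
  have h1 : ∀ a : ℝ, ContDiff ℝ n (fun x => smoothTransition (x + a)) := fun a =>
    (aux_s_smooth.comp (contDiff_id.add contDiff_const)).of_le (by exact_mod_cast le_top)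
  have : auxDiff a b = (fun x => smoothTransition (x + a)) - (fun x => smoothTransition (x + b)) :=
    rfl
  rw [this, iteratedDeriv_sub (h1 a).contDiffAt (h1 b).contDiffAt, iteratedDeriv_comp_add_const,
    iteratedDeriv_comp_add_const]
  have := abs_sub (iteratedDeriv n smoothTransition (x + a)) (iteratedDeriv n smoothTransition (x + b))
  linarith [hB (x + a), hB (x + b)]

lemma auxDiff_temperate (a b : ℝ) : (auxDiff a b).HasTemperateGrowth := by
  refine ⟨auxDiff_smooth a b, fun n => ?_⟩
  obtain ⟨B, hB0, hB⟩ := auxDiff_bound n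
  refine ⟨0, B, fun x => ?_⟩
  simpa [norm_iteratedFDeriv_eq_norm_iteratedDeriv] using hB a b x

/-- cutting off a Schwartz function -/
def auxCut (a b : ℝ) (ψ : SchwartzMap ℝ ℝ) : SchwartzMap ℝ ℝ :=
  SchwartzMap.smulLeftCLM ℝ (auxDiff a b) ψ

lemma auxCut_apply (a b : ℝ) (ψ : SchwartzMap ℝ ℝ) (x : ℝ) :
    auxCut a b ψ x = auxDiff a b x * ψ x := by
  simp [auxCut, SchwartzMap.smulLeftCLM_apply_apply (auxDiff_temperate a b)]

lemma aux_tendsto (ψ : SchwartzMap ℝ ℝ) :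
    Tendsto (fun N : ℕ => auxCut (N + 2) (-N) ψ) atTop (𝓝 ψ) := by
  rw [(schwartz_withSeminorms ℝ ℝ ℝ).tendsto_nhds]
  rintro ⟨k, n⟩ ε hε
  choose B hB0 hB using auxDiff_bound
  set b : ℝ := 1 + ∑ i ∈ Finset.range (n + 1), B i with hb
  set S : ℝ := ∑ i ∈ Finset.range (n + 1), SchwartzMap.seminorm ℝ (k + 1) i ψ with hS
  have hb0 : 0 ≤ b := by
    have : 0 ≤ ∑ i ∈ Finset.range (n + 1), B i := Finset.sum_nonneg fun i _ => (hB0 i).le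
    linarith
  have hS0 : 0 ≤ S := Finset.sum_nonneg fun i _ => apply_nonneg _ _
  have key : ∀ N : ℕ, 0 < N →
      SchwartzMap.seminorm ℝ k n (auxCut (N + 2) (-N) ψ - ψ) ≤ (2 ^ n * S * b) / N := by
    intro N hN
    have hN' : (0 : ℝ) < N := by exact_mod_cast hN
    refine SchwartzMap.seminorm_le_bound' ℝ k n _ (by positivity) fun x => ?_
    set h : ℝ → ℝ := fun y => auxDiff (N + 2) (-N) y - 1 with hh
    have hfun : (⇑(auxCut (N + 2) (-N) ψ - ψ) : ℝ → ℝ) = fun y => ψ y * h y := by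
      ext y
      simp [auxCut_apply, hh]
      ring
    rw [hfun, le_div_iff₀ hN', Real.norm_eq_abs]
    by_cases hx : |x| < N
    · have : (fun y => ψ y * h y) =ᶠ[𝓝 x] (fun _ => 0) := by
        filter_upwards [(isOpen_lt continuous_abs continuous_const).mem_nhds hx] with y hy
        have hy' := abs_lt.1 (show |y| < N from hy)
        simp only [hh, auxDiff]
        rw [smoothTransition.one_of_one_le (by linarith), smoothTransition.zero_of_nonpos (by linarith)]
        simp
      rw [this.iteratedDeriv_eq, iteratedDeriv_const]
      simp
      positivity
    · push Not at hx
      have hψ : ∀ i ≤ n, |iteratedDeriv i ψ x| ≤ S / |x| ^ (k + 1) := by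
        intro i hi
        have hx0 : 0 < |x| := hN'.trans_le hx
        rw [le_div_iff₀ (by positivity), mul_comm]
        have h1 := SchwartzMap.le_seminorm' ℝ (k + 1) i ψ x
        rw [Real.norm_eq_abs] at h1
        refine h1.trans ?_
        exact Finset.single_le_sum (f := fun i => SchwartzMap.seminorm ℝ (k + 1) i ψ)
          (fun i _ => apply_nonneg _ _) (by simpa [Nat.lt_succ_iff] using hi)
      have hhs : ContDiff ℝ (⊤ : ℕ∞) h := (auxDiff_smooth _ _).sub contDiff_const
      have hhb : ∀ i ≤ n, |iteratedDeriv i h x| ≤ b := by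
        intro i hi
        have h1 : h = auxDiff (N + 2) (-N) - (fun _ => (1 : ℝ)) := rfl
        rw [h1, iteratedDeriv_sub ((auxDiff_smooth _ _).of_le (by exact_mod_cast le_top)).contDiffAt
          contDiff_const.contDiffAt, iteratedDeriv_const]
        have h2 : |(if i = 0 then (1 : ℝ) else 0)| ≤ 1 := by split_ifs <;> simp
        have h3 := Finset.single_le_sum (f := B) (s := Finset.range (n + 1))
          (fun i _ => (hB0 i).le) (show i ∈ _ by simpa [Nat.lt_succ_iff] using hi)
        have h4 := hB i (N + 2) (-N) x
        have h5 := abs_sub (iteratedDeriv i (auxDiff (N + 2) (-N)) x) (if i = 0 then (1 : ℝ) else 0)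
        linarith
      have h6 := aux_prod_bound (ψ.smooth _) hhs n x _ _ hψ hhb
      have hx0 : 0 < |x| := hN'.trans_le hx
      calc |x| ^ k * |iteratedDeriv n (fun y => ψ y * h y) x| * N
          ≤ |x| ^ k * (2 ^ n * (S / |x| ^ (k + 1) * b)) * |x| := by gcongr
        _ = 2 ^ n * S * b := by
          rw [pow_succ]; field_simp
  have hlim : Tendsto (fun N : ℕ => (2 ^ n * S * b) / (N : ℝ)) atTop (𝓝 0) :=
    tendsto_const_div_atTop_nhds_zero_nat _
  filter_upwards [hlim.eventually_lt_const hε, eventually_gt_atTop 0] with N h1 h2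
  exact (key N h2).trans_lt h1

lemma auxCut_sum (ψ : SchwartzMap ℝ ℝ) (N : ℕ) :
    ∑ k ∈ Finset.range (N + 1), (auxCut (-(k : ℝ) + 1) (-(k : ℝ)) ψ +
      auxCut ((k + 1 : ℝ) + 1) (k + 1 : ℝ) ψ) = auxCut (N + 2) (-N) ψ := by
  induction N with
  | zero =>
    ext x
    simp [auxCut_apply, auxDiff]
    try norm_num
    try ring
  | succ N ih =>
    rw [Finset.sum_range_succ, ih]
    ext x
    simp only [add_apply, auxCut_apply, auxDiff]
    push_cast
    have e1 : x + (-((N : ℝ) + 1) + 1) = x + -N := by ring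
    have e2 : x + ((N : ℝ) + 1 + 1) = x + (N + 2) := by ring
    have e3 : x + ((N : ℝ) + 1 + 1 + 1) = x + (N + 1 + 2) := by ring
    rw [e1, e2, e3]
    ring

/-- rescaling -/
lemma aux_scale (x lam : ℝ) (hl : 0 < lam) : ∃ T : SchwartzMap ℝ ℝ →L[ℝ] SchwartzMap ℝ ℝ,
    ∀ f y, T f y = lam⁻¹ * f (lam⁻¹ * (y - x)) := by
  let e : ℝ ≃L[ℝ] ℝ := ContinuousLinearEquiv.unitsEquivAut ℝ (Units.mk0 lam⁻¹ (by positivity))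
  refine ⟨lam⁻¹ • (SchwartzMap.compSubConstCLM ℝ x).comp
    (SchwartzMap.compCLMOfContinuousLinearEquiv ℝ e), fun f y => ?_⟩
  have he : ∀ z, e z = lam⁻¹ * z := fun z => by simp [e, mul_comm]
  simp [he]

lemma aux_piece (γ δ : ℝ) (r : ℕ) (hγ : 0 ≤ γ) (hδ : 0 < δ) (A : ℝ) (hA : 0 < A) (b : ℝ)
    (hb : 0 < b) (hbb : ∀ j ≤ r, ∀ x, |iteratedDeriv j (auxDiff 1 0) x| ≤ b)
    (α : ℝ) (ψ : SchwartzMap ℝ ℝ)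
    (hψ : ∀ j ≤ r, ∀ x : ℝ, (1 + |x|) ^ δ * |iteratedDeriv j (fun y => ψ y) x| ≤ A)
    (ζ : ℝ → (SchwartzMap ℝ ℝ →L[ℝ] ℝ)) (C : ℝ) (hC : 0 < C)
    (h1 : ∀ x : ℝ, ∀ lam : ℝ, lam ∈ Set.Ioc (0 : ℝ) 1 →
          ∀ φ : ℝ → ℝ, IsTestFunction r φ →
          ∀ Φ : SchwartzMap ℝ ℝ, (∀ y : ℝ, Φ y = lam⁻¹ * φ (lam⁻¹ * (y - x))) →
          |ζ x Φ| ≤ C * lam ^ α)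
    (h2 : ∀ x y : ℝ, ∀ lam : ℝ, lam ∈ Set.Ioc (0 : ℝ) 1 → lam ≤ |x - y| →
          ∀ φ : ℝ → ℝ, IsTestFunction r φ →
          ∀ Φ : SchwartzMap ℝ ℝ, (∀ z : ℝ, Φ z = lam⁻¹ * φ (lam⁻¹ * (z - x))) →
          |ζ x Φ - ζ y Φ| ≤ C * lam ^ (α - γ) * |x - y| ^ γ)
    (x lam : ℝ) (hl : lam ∈ Set.Ioc (0 : ℝ) 1)
    (T : SchwartzMap ℝ ℝ →L[ℝ] SchwartzMap ℝ ℝ)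
    (hT : ∀ f y, T f y = lam⁻¹ * f (lam⁻¹ * (y - x))) (k : ℝ) (hk : k = 0 ∨ 1 ≤ |k|) :
    |ζ x (T (auxCut (-k + 1) (-k) ψ))| ≤
      2 ^ r * (A * 2 ^ δ * b) * 2 * (1 + |k|) ^ (γ - δ) * (C * lam ^ α) := by
  have hl0 : 0 < lam := hl.1
  have hk1 : 0 < 1 + |k| := by positivity
  have hla : 0 < lam ^ α := Real.rpow_pos_of_pos hl0 _
  set c : ℝ := 2 ^ r * (A * 2 ^ δ * (1 + |k|) ^ (-δ) * b) with hc
  have hc0 : 0 < c := by positivity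
  set φ : ℝ → ℝ := fun u => c⁻¹ * (ψ (u + k) * auxDiff 1 0 u) with hφ
  have hψs : ContDiff ℝ (⊤ : ℕ∞) (fun u => ψ (u + k)) :=
    (ψ.smooth _).comp (contDiff_id.add contDiff_const)
  have hout : ∀ y : ℝ, y ∉ Set.Icc (-1 : ℝ) 1 → auxDiff 1 0 y = 0 := by
    intro y hy
    rw [Set.mem_Icc, not_and_or, not_le, not_le] at hy
    unfold auxDiff
    rcases hy with hy | hy
    · rw [smoothTransition.zero_of_nonpos (by linarith), smoothTransition.zero_of_nonpos (by linarith)]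
      simp
    · rw [smoothTransition.one_of_one_le (by linarith), smoothTransition.one_of_one_le (by linarith)]
      simp
  have hφT : IsTestFunction r φ := by
    refine ⟨contDiff_const.mul (hψs.mul (auxDiff_smooth _ _)), ?_, ?_⟩
    · intro y hy
      simp [hφ, hout y hy]
    · intro j hj y
      rw [hφ, iteratedDeriv_const_mul_field, abs_mul, abs_of_pos (inv_pos.2 hc0), inv_mul_le_iff₀ hc0,
        mul_one]
      by_cases hy : y ∈ Set.Icc (-1 : ℝ) 1
      · have hpr := aux_prod_bound hψs (auxDiff_smooth 1 0) j y (A * 2 ^ δ * (1 + |k|) ^ (-δ)) b ?_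
          (fun i hi => hbb i (hi.trans hj) y)
        · refine hpr.trans ?_
          rw [hc]
          gcongr
          norm_num
        · intro i hi
          rw [iteratedDeriv_comp_add_const]
          have h := hψ i (hi.trans hj) (y + k)
          have hpos : 0 < 1 + |y + k| := by positivity
          have hle : 1 + |k| ≤ 2 * (1 + |y + k|) := by
            have h3 : |y| ≤ 1 := abs_le.2 hy
            have h4 : |k| ≤ |y + k| + |y| := by
              have := abs_sub (y + k) y
              simpa using this
            have := abs_nonneg (y + k)
            linarith
          have h5 : (1 + |k|) ^ δ ≤ 2 ^ δ * (1 + |y + k|) ^ δ := by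
            rw [← Real.mul_rpow (by norm_num) hpos.le]
            exact Real.rpow_le_rpow hk1.le hle hδ.le
          rw [Real.rpow_neg hk1.le, ← div_eq_mul_inv, le_div_iff₀ (by positivity)]
          calc |iteratedDeriv i (fun y => ψ y) (y + k)| * (1 + |k|) ^ δ
              ≤ |iteratedDeriv i (fun y => ψ y) (y + k)| * (2 ^ δ * (1 + |y + k|) ^ δ) := by gcongr
            _ = ((1 + |y + k|) ^ δ * |iteratedDeriv i (fun y => ψ y) (y + k)|) * 2 ^ δ := by ring
            _ ≤ A * 2 ^ δ := by gcongr
      · have : (fun u => ψ (u + k) * auxDiff 1 0 u) =ᶠ[𝓝 y] fun _ => 0 := by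
          filter_upwards [isClosed_Icc.isOpen_compl.mem_nhds hy] with z hz
          simp [hout z hz]
        rw [this.iteratedDeriv_eq, iteratedDeriv_const]
        simp [hc0.le]
  set F := T (auxCut (-k + 1) (-k) ψ) with hF
  have hΦ : ∀ y, (c⁻¹ • F) y = lam⁻¹ * φ (lam⁻¹ * (y - (x + lam * k))) := by
    intro y
    have e : lam⁻¹ * (y - (x + lam * k)) = lam⁻¹ * (y - x) - k := by field_simp; ring
    rw [e]
    simp only [smul_apply, hF, hT, auxCut_apply, hφ, smul_eq_mul, auxDiff]
    have e1 : lam⁻¹ * (y - x) - k + k = lam⁻¹ * (y - x) := by ring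
    have e2 : lam⁻¹ * (y - x) - k + 1 = lam⁻¹ * (y - x) + (-k + 1) := by ring
    have e3 : lam⁻¹ * (y - x) - k + 0 = lam⁻¹ * (y - x) + -k := by ring
    rw [e1, e2, e3]
    ring
  have hb1 := h1 _ lam hl φ hφT _ hΦ
  have hkγ : 1 ≤ (1 + |k|) ^ γ := Real.one_le_rpow (by linarith [abs_nonneg k]) hγ
  have hmain : |ζ x (c⁻¹ • F)| ≤ 2 * (1 + |k|) ^ γ * (C * lam ^ α) := by
    have hCl : 0 < C * lam ^ α := by positivity
    rcases hk with hk | hk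
    · rw [hk, mul_zero, add_zero] at hb1
      nlinarith
    · have hd : |x + lam * k - x| = lam * |k| := by
        rw [add_sub_cancel_left, abs_mul, abs_of_pos hl0]
      have hb2 := h2 (x + lam * k) x lam hl (by rw [hd]; nlinarith) φ hφT _ hΦ
      rw [hd, Real.mul_rpow hl0.le (abs_nonneg k), ← mul_assoc, mul_assoc C, ← Real.rpow_add hl0,
        sub_add_cancel] at hb2
      have h7 : |k| ^ γ ≤ (1 + |k|) ^ γ := Real.rpow_le_rpow (abs_nonneg k) (by linarith) hγ
      have h8 : |ζ x (c⁻¹ • F)| ≤ |ζ (x + lam * k) (c⁻¹ • F)| +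
          |ζ (x + lam * k) (c⁻¹ • F) - ζ x (c⁻¹ • F)| := by
        have := abs_sub (ζ (x + lam * k) (c⁻¹ • F)) (ζ (x + lam * k) (c⁻¹ • F) - ζ x (c⁻¹ • F))
        simpa using this
      nlinarith
  rw [map_smul, smul_eq_mul, abs_mul, abs_of_pos (inv_pos.2 hc0), inv_mul_le_iff₀ hc0] at hmain
  refine hmain.trans_eq ?_
  rw [hc, sub_eq_add_neg, Real.rpow_add hk1]
  ring

/-- reconstruction-type bound for pairings against rescaled Schwartz
functions, given bounds against rescaled compactly supported test functions. -/
theorem statement0 (α γ δ : ℝ) (r : ℕ) (hγ : 0 ≤ γ) (hδ : 0 < δ)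
    (hγδ : γ - δ < -1) (hr : |α| < (r : ℝ)) (A : ℝ) (hA : 0 < A) :
    ∃ C' : ℝ, 0 < C' ∧
      ∀ ψ : SchwartzMap ℝ ℝ,
        (∀ j ≤ r, ∀ x : ℝ, (1 + |x|) ^ δ * |iteratedDeriv j (fun y => ψ y) x| ≤ A) →
        ∀ (ζ : ℝ → (SchwartzMap ℝ ℝ →L[ℝ] ℝ)) (C : ℝ), 0 < C →
        (∀ x : ℝ, ∀ lam : ℝ, lam ∈ Set.Ioc (0 : ℝ) 1 →
          ∀ φ : ℝ → ℝ, IsTestFunction r φ →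
          ∀ Φ : SchwartzMap ℝ ℝ, (∀ y : ℝ, Φ y = lam⁻¹ * φ (lam⁻¹ * (y - x))) →
          |ζ x Φ| ≤ C * lam ^ α) →
        (∀ x y : ℝ, ∀ lam : ℝ, lam ∈ Set.Ioc (0 : ℝ) 1 → lam ≤ |x - y| →
          ∀ φ : ℝ → ℝ, IsTestFunction r φ →
          ∀ Φ : SchwartzMap ℝ ℝ, (∀ z : ℝ, Φ z = lam⁻¹ * φ (lam⁻¹ * (z - x))) →
          |ζ x Φ - ζ y Φ| ≤ C * lam ^ (α - γ) * |x - y| ^ γ) →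
        ∀ x : ℝ, ∀ lam : ℝ, lam ∈ Set.Ioc (0 : ℝ) 1 →
          ∀ Ψ : SchwartzMap ℝ ℝ, (∀ y : ℝ, Ψ y = lam⁻¹ * ψ (lam⁻¹ * (y - x))) →
          |ζ x Ψ| ≤ C' * C * lam ^ α := by
  choose B hB0 hB using auxDiff_bound
  set b : ℝ := ∑ i ∈ Finset.range (r + 1), B i with hb
  have hb0 : 0 < b := Finset.sum_pos (fun i _ => hB0 i) ⟨0, by simp⟩
  have hbb : ∀ j ≤ r, ∀ x, |iteratedDeriv j (auxDiff 1 0) x| ≤ b := fun j hj x =>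
    (hB j 1 0 x).trans (Finset.single_le_sum (f := B) (fun i _ => (hB0 i).le)
      (by simpa [Nat.lt_succ_iff] using hj))
  set D : ℝ := 2 ^ r * (A * 2 ^ δ * b) * 2 with hD
  have hD0 : 0 < D := by positivity
  have hsum : Summable (fun n : ℕ => (1 + (n : ℝ)) ^ (γ - δ)) := by
    have h := (summable_nat_add_iff 1).2 (Real.summable_nat_rpow.2 hγδ)
    simpa [add_comm] using h
  set Z : ℝ := ∑' n : ℕ, (1 + (n : ℝ)) ^ (γ - δ) with hZ
  have hZ0 : 0 ≤ Z := tsum_nonneg fun n => by positivity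
  refine ⟨2 * D * Z + 1, by positivity, ?_⟩
  intro ψ hψ ζ C hC h1 h2 x lam hl Ψ hΨ
  have hl0 : 0 < lam := hl.1
  obtain ⟨T, hT⟩ := aux_scale x lam hl0
  have hTψ : Ψ = T ψ := by
    ext y
    rw [hT, hΨ]
  have hla : 0 < lam ^ α := Real.rpow_pos_of_pos hl0 _
  have hp := aux_piece γ δ r hγ hδ A hA b hb0 hbb α ψ hψ ζ C hC h1 h2 x lam hl T hT
  have hN : ∀ N : ℕ, |ζ x (T (auxCut (N + 2) (-N) ψ))| ≤ (2 * D * Z + 1) * C * lam ^ α := by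
    intro N
    rw [← auxCut_sum, map_sum, map_sum]
    refine (Finset.abs_sum_le_sum_abs _ _).trans ?_
    calc _ ≤ ∑ k ∈ Finset.range (N + 1), (1 + (k : ℝ)) ^ (γ - δ) * (2 * D * (C * lam ^ α)) := by
          refine Finset.sum_le_sum fun k _ => ?_
          rw [map_add, map_add]
          refine (abs_add_le _ _).trans ?_
          have a1 := hp k (by
            rcases Nat.eq_zero_or_pos k with h | h
            · left; simp [h]
            · right; rw [Nat.abs_cast]; exact_mod_cast h)
          have hab : |(-(k + 1 : ℝ))| = k + 1 := by rw [abs_neg, abs_of_pos (by positivity)]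
          have a2 := hp (-(k + 1 : ℝ)) (by right; rw [hab]; linarith [Nat.cast_nonneg (α := ℝ) k])
          rw [hab, neg_neg] at a2
          rw [Nat.abs_cast] at a1
          have a3 : (1 + ((k : ℝ) + 1)) ^ (γ - δ) ≤ (1 + (k : ℝ)) ^ (γ - δ) :=
            Real.rpow_le_rpow_of_nonpos (by positivity) (by linarith) (by linarith)
          have a4 : D * (1 + ((k : ℝ) + 1)) ^ (γ - δ) * (C * lam ^ α) ≤
              D * (1 + (k : ℝ)) ^ (γ - δ) * (C * lam ^ α) := by gcongr
          rw [← hD] at a1 a2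
          linarith
      _ ≤ Z * (2 * D * (C * lam ^ α)) := by
          rw [← Finset.sum_mul]
          gcongr
          exact hsum.sum_le_tsum _ fun n _ => by positivity
      _ ≤ _ := by
          have : 0 < C * lam ^ α := by positivity
          nlinarith
  have hlim : Tendsto (fun N : ℕ => |ζ x (T (auxCut (N + 2) (-N) ψ))|) atTop (𝓝 |ζ x (T ψ)|) :=
    (((ζ x).continuous.tendsto _).comp ((T.continuous.tendsto _).comp (aux_tendsto ψ))).abs
  rw [hTψ]
  exact le_of_tendsto' hlim hN
end
end

section
/- Let T ∈ (0,1], β > −2, ρ ∈ (−2,0], let n ∈ ℕ satisfy β+1 ≤ n < β+2, let r ∈ ℕ satisfy r > |β|, and let C > 0. Let ζ : (0,T] → 𝒮′(ℝ) satisfy |⟨ζ(t), φ_x^λ⟩| ≤ C λ^β |t|₀^ρ for all t ∈ (0,T], x ∈ ℝ, λ ∈ (0,1] and φ ∈ B^r_0, with s ↦ ⟨ζ(s), φ⟩ measurable for each Schwartz φ. Define (P^{(n)} ∗ ζ)(t,x) := ∫₀^{t} ⟨ζ(s), P^{(n)}_{t−s}(x−·)⟩ ds. Then for every θ₁ ∈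 (0, β−n+2) and every θ₂ ∈ ℝ with θ := θ₁ − θ₂ > 0, setting β̄ := β+2−n−θ₁ and ρ̄ := ρ+θ₂, there is a constant C′ independent of C, T and ζ such that sup_{(t,x)∈(0,T]×ℝ} |t|₀^{−(ρ̄+β̄)} |(P^{(n)} ∗ ζ)(t,x)| + sup_{(t,x)∈(0,T]×ℝ} sup_{(t̄,x̄)∈(0,T]×ℝ, (t̄,x̄)≠(t,x), |t̄−t|≤|t,t̄|₀²} |(P^{(n)} ∗ ζ)(t̄,x̄) − (P^{(n)} ∗ ζ)(t,x)| / (|t,t̄|₀^{ρ̄} ‖(t̄,x̄)−(t,x)‖_s^{β̄}) ≤ C′ C T^{θ/2}. -/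
open Real MeasureTheory

noncomputable section

/-- The heat kernel `P_t(x) = (4πt)^{-1/2} e^{-x²/(4t)}` for `t > 0`, and `0`
for `t ≤ 0`. -/
def heatKernel (t x : ℝ) : ℝ :=
  if 0 < t then (4 * Real.pi * t) ^ (-(1 : ℝ) / 2) * Real.exp (-(x ^ 2) / (4 * t)) else 0

/-- `|t|₀ = |t|^{1/2} ∧ 1`. -/
def tnorm (t : ℝ) : ℝ := min (Real.sqrt |t|) 1

/-- `|t,t̄|₀ = |t|₀ ∧ |t̄|₀`. -/
def tnorm2 (t s : ℝ) : ℝ := min (tnorm t) (tnorm s)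

/-- The parabolic distance `‖z̄ - z‖_s = |t̄-t|^{1/2} ∨ |x̄-x|`. -/
def pnormS (z w : ℝ × ℝ) : ℝ := max (Real.sqrt |z.1 - w.1|) |z.2 - w.2|

open Filter Topology

lemma aux_mul_bound (f g : ℝ → ℝ) (hf : ContDiff ℝ (⊤ : ℕ∞) f) (hg : ContDiff ℝ (⊤ : ℕ∞) g)
    (l : ℕ) (y A B : ℝ) (_hB0 : 0 ≤ B) (hA : ∀ i ≤ l, |iteratedDeriv i f y| ≤ A)
    (hB : ∀ i ≤ l, |iteratedDeriv i g y| ≤ B) :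
    |iteratedDeriv l (fun z => f z * g z) y| ≤ 2 ^ l * (A * B) := by
  have h := norm_iteratedFDeriv_mul_le (𝕜 := ℝ) hf hg y (n := l) (by exact_mod_cast le_top)
  simp only [norm_iteratedFDeriv_eq_norm_iteratedDeriv, Real.norm_eq_abs] at h
  refine h.trans ?_
  have h2 : ∀ i ∈ Finset.range (l+1), (l.choose i : ℝ) * |iteratedDeriv i f y| * |iteratedDeriv (l - i) g y|
      ≤ (l.choose i : ℝ) * (A * B) := by
    intro i hi
    have h1 := hA i (by simpa [Nat.lt_succ_iff] using hi)
    have h2 := hB (l-i) (Nat.sub_le _ _)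
    rw [mul_assoc]
    gcongr
    exact (abs_nonneg _).trans h1
  refine (Finset.sum_le_sum h2).trans ?_
  rw [← Finset.sum_mul]
  have := Nat.sum_range_choose l
  have h3 : (∑ i ∈ Finset.range (l+1), (l.choose i : ℝ)) = 2 ^ l := by exact_mod_cast this
  rw [h3]

lemma aux_cutoff (Φ : SchwartzMap ℝ ℝ) (η : ℕ → ℝ → ℝ)
    (hη : ∀ m, ContDiff ℝ (⊤ : ℕ∞) (η m))
    (hb : ∀ l : ℕ, ∃ B, ∀ m y, |iteratedDeriv l (η m) y| ≤ B)
    (c D : ℝ) (hc : 0 < c) (hz : ∀ (m : ℕ) (y : ℝ), |y| < c * m - D → η m y = 0)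
    (Ψ : ℕ → SchwartzMap ℝ ℝ) (hΨ : ∀ m y, Ψ m y - Φ y = Φ y * η m y) :
    Tendsto Ψ atTop (𝓝 Φ) := by
  rw [(schwartz_withSeminorms ℝ ℝ ℝ).tendsto_nhds]
  rintro ⟨k, l⟩ ε hε
  choose B hB using hb
  set Bm := ∑ i ∈ Finset.range (l+1), |B i| with hBm
  have hBl : ∀ i ≤ l, ∀ m y, |iteratedDeriv i (η m) y| ≤ Bm := by
    intro i hi m y
    refine (hB i m y).trans ((le_abs_self _).trans ?_)
    exact Finset.single_le_sum (f := fun i => |B i|) (fun _ _ => abs_nonneg _) (by simpa [Nat.lt_succ_iff] using hi)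
  have hBm0 : 0 ≤ Bm := Finset.sum_nonneg (fun _ _ => abs_nonneg _)
  set S := ∑ i ∈ Finset.range (l+1), SchwartzMap.seminorm ℝ (k+1) i Φ with hS
  have hSl : ∀ i ≤ l, SchwartzMap.seminorm ℝ (k+1) i Φ ≤ S := by
    intro i hi
    exact Finset.single_le_sum (f := fun i => SchwartzMap.seminorm ℝ (k+1) i Φ) (fun _ _ => apply_nonneg _ _) (by simpa [Nat.lt_succ_iff] using hi)
  have hS0 : 0 ≤ S := Finset.sum_nonneg (fun _ _ => apply_nonneg _ _)
  have hlim : Tendsto (fun m : ℕ => c * (m : ℝ) - D) atTop atTop :=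
    tendsto_atTop_add_const_right _ _ (tendsto_natCast_atTop_atTop.const_mul_atTop hc)
  filter_upwards [hlim.eventually_gt_atTop 0, hlim.eventually_gt_atTop (2 ^ l * (S * Bm) / ε)] with m hm0 hm
  have : SchwartzMap.seminorm ℝ k l (Ψ m - Φ) ≤ 2 ^ l * (S * Bm) / (c * m - D) := by
    refine SchwartzMap.seminorm_le_bound' ℝ k l _ (by positivity) ?_
    intro y
    have hfun : ⇑(Ψ m - Φ) = fun y => Φ y * η m y := by
      ext y; simpa using hΨ m y
    rw [hfun, Real.norm_eq_abs]
    by_cases hy : |y| < c * m - D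
    · have hev : (fun y => Φ y * η m y) =ᶠ[𝓝 y] fun _ => 0 := by
        filter_upwards [continuous_abs.continuousAt.eventually_lt continuousAt_const hy] with z hz'
        simp [hz m z hz']
      rw [hev.iteratedDeriv_eq l]
      have h0 : iteratedDeriv l (fun _ : ℝ => (0:ℝ)) y = 0 := by
        simp
      rw [h0]; simp; positivity
    · push Not at hy
      have hy0 : 0 < |y| := hm0.trans_le hy
      have h1 := aux_mul_bound Φ (η m) (Φ.smooth _) (hη m) l y (S / |y| ^ (k+1)) Bm hBm0 ?_ (fun i hi => hBl i hi m y)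
      · calc |y| ^ k * |iteratedDeriv l (fun y => Φ y * η m y) y| ≤ |y| ^ k * (2 ^ l * (S / |y| ^ (k+1) * Bm)) := by gcongr
          _ = 2 ^ l * (S * Bm) / |y| := by field_simp; ring
          _ ≤ _ := by gcongr
      · intro i hi
        rw [le_div_iff₀ (by positivity), mul_comm]
        exact (SchwartzMap.le_seminorm' ℝ (k+1) i Φ y).trans (hSl i hi)
  refine lt_of_le_of_lt this ?_
  rw [div_lt_iff₀ hm0]
  rwa [div_lt_iff₀' hε] at hm
  
lemma aux_smoothT_bound (l : ℕ) : ∃ B : ℝ, ∀ u, |iteratedDeriv l Real.smoothTransition u| ≤ B := by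
  have hcont : Continuous (iteratedDeriv l Real.smoothTransition) :=
    (Real.smoothTransition.contDiff (n := ⊤)).continuous_iteratedDeriv l (by exact_mod_cast le_top)
  obtain ⟨B, hB⟩ := (isCompact_Icc (a := (0:ℝ)) (b := 1)).exists_bound_of_continuousOn hcont.continuousOn
  refine ⟨max B 1, fun u => ?_⟩
  by_cases hu : u ∈ Set.Icc (0:ℝ) 1
  · exact (hB u hu).trans (le_max_left _ _)
  · have hc : ∀ c : ℝ, |c| ≤ 1 → |iteratedDeriv l (fun _ : ℝ => c) u| ≤ 1 := by
      intro c hc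
      rw [iteratedDeriv_const]; split_ifs <;> simp [hc]
    rw [Set.mem_Icc, not_and_or] at hu
    push Not at hu
    refine le_trans ?_ (le_max_right _ _)
    rcases hu with hu | hu
    · have : Real.smoothTransition =ᶠ[𝓝 u] fun _ => 0 := by
        filter_upwards [gt_mem_nhds hu] with z hz using Real.smoothTransition.zero_of_nonpos hz.le
      rw [this.iteratedDeriv_eq l]; exact hc 0 (by simp)
    · have : Real.smoothTransition =ᶠ[𝓝 u] fun _ => 1 := by
        filter_upwards [lt_mem_nhds hu] with z hz using Real.smoothTransition.one_of_one_le hz.le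
      rw [this.iteratedDeriv_eq l]; exact hc 1 (by simp)

def psiB (u : ℝ) : ℝ := Real.smoothTransition (u + 1) - Real.smoothTransition u

lemma psiB_smooth : ContDiff ℝ (⊤ : ℕ∞) psiB :=
  ((Real.smoothTransition.contDiff).comp (contDiff_id.add contDiff_const)).sub Real.smoothTransition.contDiff

lemma psiB_zero (u : ℝ) (hu : u ∉ Set.Icc (-1:ℝ) 1) : psiB u = 0 := by
  rw [Set.mem_Icc, not_and_or] at hu
  push Not at hu
  unfold psiB
  rcases hu with hu | hu
  · rw [Real.smoothTransition.zero_of_nonpos (by linarith), Real.smoothTransition.zero_of_nonpos (by linarith)]; simp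
  · rw [Real.smoothTransition.one_of_one_le (by linarith), Real.smoothTransition.one_of_one_le (by linarith)]; simp

lemma psiB_bound (l : ℕ) : ∃ B : ℝ, ∀ u, |iteratedDeriv l psiB u| ≤ B := by
  obtain ⟨B, hB⟩ := aux_smoothT_bound l
  refine ⟨B + B, fun u => ?_⟩
  have h1 : ContDiff ℝ (⊤ : ℕ∞) (fun u => Real.smoothTransition (u + 1)) :=
    (Real.smoothTransition.contDiff).comp (contDiff_id.add contDiff_const)
  have h2 : ContDiff ℝ (⊤ : ℕ∞) Real.smoothTransition := Real.smoothTransition.contDiff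
  have : iteratedDeriv l psiB u = iteratedDeriv l Real.smoothTransition (u + 1) - iteratedDeriv l Real.smoothTransition u := by
    have := iteratedDeriv_fun_sub (n := l) (x := u) (h1.contDiffAt.of_le (by exact_mod_cast le_top)) (h2.contDiffAt.of_le (by exact_mod_cast le_top))
    rw [iteratedDeriv_comp_add_const] at this
    exact this
  rw [this]
  exact (abs_sub _ _).trans (add_le_add (hB _) (hB _))

lemma aux_affine_iter (f : ℝ → ℝ) (hf : ContDiff ℝ (⊤ : ℕ∞) f) (c a : ℝ) (l : ℕ) :
    iteratedDeriv l (fun y => f (c * (y - a))) = fun y => c ^ l * iteratedDeriv l f (c * (y - a)) := by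
  have h1 := iteratedDeriv_comp_sub_const l (fun y => f (c * y)) a
  rw [h1, iteratedDeriv_comp_const_mul (hf.of_le (by exact_mod_cast le_top))]

lemma aux_pair (r : ℕ) : ∃ K : ℝ, 0 < K ∧ ∀ (L : SchwartzMap ℝ ℝ →L[ℝ] ℝ) (x lam M : ℝ), 0 < lam → 0 ≤ M →
    (∀ x : ℝ, ∀ φ : ℝ → ℝ, IsTestFunction r φ →
      ∀ Φ : SchwartzMap ℝ ℝ, (∀ y : ℝ, Φ y = lam⁻¹ * φ (lam⁻¹ * (y - x))) → |L Φ| ≤ M) →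
    ∀ g : ℝ → ℝ, ContDiff ℝ (⊤ : ℕ∞) g → ∀ N : ℝ, 0 < N →
    (∀ j ≤ r, ∀ u, (1 + u ^ 2) * |iteratedDeriv j g u| ≤ N) →
    ∀ Φ : SchwartzMap ℝ ℝ, (∀ y : ℝ, Φ y = lam⁻¹ * g (lam⁻¹ * (y - x))) → |L Φ| ≤ K * N * M := by
  choose B0 hB0 using psiB_bound
  set B := 1 + ∑ i ∈ Finset.range (r+1), |B0 i| with hBdef
  have hBpos : 0 < B := by
    have : 0 ≤ ∑ i ∈ Finset.range (r+1), |B0 i| := Finset.sum_nonneg (fun _ _ => abs_nonneg _)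
    linarith
  have hB : ∀ i ≤ r, ∀ u, |iteratedDeriv i psiB u| ≤ B := by
    intro i hi u
    refine (hB0 i u).trans ((le_abs_self _).trans ?_)
    have := Finset.single_le_sum (s := Finset.range (r+1)) (f := fun i => |B0 i|) (fun _ _ => abs_nonneg _) (a := i) (by simpa [Nat.lt_succ_iff] using hi)
    linarith
  have hsum : Summable (fun k : ℤ => (1 + (k:ℝ)^2)⁻¹) := by
    have h1 : Summable (fun k : ℤ => 1 / (k:ℝ)^2) := Real.summable_one_div_int_pow.2 (by norm_num)
    refine Summable.of_norm_bounded_eventually (g := fun k : ℤ => 1 / (k:ℝ)^2) h1 ?_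
    have : ∀ᶠ k : ℤ in cofinite, k ≠ 0 := by
      exact (Set.finite_singleton (0:ℤ)).subset (fun k hk => by simpa using hk)
    filter_upwards [this] with k hk
    have hk' : (0:ℝ) < (k:ℝ)^2 := by positivity
    rw [Real.norm_of_nonneg (by positivity), one_div]
    gcongr; linarith
  set Z := ∑' k : ℤ, (1 + (k:ℝ)^2)⁻¹ with hZ
  have hZ0 : 0 < Z := by
    refine hsum.tsum_pos (fun k => by positivity) 0 (by norm_num)
  refine ⟨3 * 2 ^ r * B * Z, by positivity, ?_⟩
  intro L x lam M hlam hM hL g hg N hN hgN Φ hΦ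
  set c : ℤ → ℝ := fun k => 3 * 2 ^ r * B * N * (1 + (k:ℝ)^2)⁻¹ with hc
  have hcpos : ∀ k, 0 < c k := fun k => by simp only [hc]; positivity
  set p : ℤ → ℝ → ℝ := fun k u => g (u + k) * psiB u with hp
  have hgk : ∀ k : ℤ, ContDiff ℝ (⊤ : ℕ∞) (fun u => g (u + k)) := fun k => 
    hg.comp (contDiff_id.add contDiff_const)
  have hps : ∀ k, ContDiff ℝ (⊤ : ℕ∞) (p k) := fun k => (hgk k).mul psiB_smooth
  have hpz : ∀ k u, u ∉ Set.Icc (-1:ℝ) 1 → p k u = 0 := fun k u hu => by simp [hp, psiB_zero u hu]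
  have hpb : ∀ k, ∀ j ≤ r, ∀ u, |iteratedDeriv j (p k) u| ≤ c k := by
    intro k j hj u
    by_cases hu : u ∈ Set.Icc (-1:ℝ) 1
    · have h1 := aux_mul_bound (fun u => g (u + k)) psiB (hgk k) psiB_smooth j u
        (N * (1 + (u + k)^2)⁻¹) B hBpos.le ?_ (fun i hi => hB i (hi.trans hj) u)
      · refine h1.trans ?_
        have h3 : (1 + (u + k)^2)⁻¹ ≤ 3 * (1 + (k:ℝ)^2)⁻¹ := by
          rw [inv_le_comm₀ (by positivity) (by positivity), mul_inv, inv_inv]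
          obtain ⟨h4, h5⟩ := hu
          have : u^2 ≤ 1 := by nlinarith
          nlinarith [sq_nonneg (2 * u + k), sq_nonneg (u + k)]
        have h6 : (2:ℝ)^j ≤ 2 ^ r := pow_le_pow_right₀ (by norm_num) hj
        calc (2:ℝ)^j * (N * (1 + (u + k)^2)⁻¹ * B) ≤ 2 ^ r * (N * (3 * (1 + (k:ℝ)^2)⁻¹) * B) := by gcongr
          _ = c k := by simp only [hc]; ring
      · intro i hi
        rw [iteratedDeriv_comp_add_const]
        have := hgN i (hi.trans hj) (u + k)
        rw [← div_eq_mul_inv, le_div_iff₀ (by positivity)]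
        linarith
    · have hev : p k =ᶠ[𝓝 u] fun _ => 0 := by
        filter_upwards [isClosed_Icc.isOpen_compl.mem_nhds hu] with z hz using hpz k z hz
      rw [hev.iteratedDeriv_eq j]
      have h0 : iteratedDeriv j (fun _ : ℝ => (0:ℝ)) u = 0 := by
        simp
      rw [h0]; simpa using (hcpos k).le
  set q : ℤ → ℝ → ℝ := fun k y => lam⁻¹ * p k (lam⁻¹ * (y - (x + lam * k))) with hq
  have hqs : ∀ k, ContDiff ℝ (⊤ : ℕ∞) (q k) := fun k => 
    contDiff_const.mul ((hps k).comp (contDiff_const.mul (contDiff_id.sub contDiff_const)))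
  have hqc : ∀ k, HasCompactSupport (q k) := by
    intro k
    refine HasCompactSupport.intro (K := Set.Icc (x + lam * k - lam) (x + lam * k + lam)) isCompact_Icc ?_
    intro y hy
    simp only [hq]
    rw [hpz, mul_zero]
    intro h
    apply hy
    obtain ⟨h1, h2⟩ := h
    rw [inv_mul_eq_div] at h1 h2
    rw [le_div_iff₀ hlam] at h1
    rw [div_le_iff₀ hlam] at h2
    constructor <;> linarith
  set Q : ℤ → SchwartzMap ℝ ℝ := fun k => (hqc k).toSchwartzMap (hqs k) with hQ
  have hQa : ∀ k y, Q k y = q k y := fun k y => rfl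
  have hLQ : ∀ k, |L (Q k)| ≤ c k * M := by
    intro k
    have h1 : |L ((c k)⁻¹ • Q k)| ≤ M := by
      refine hL (x + lam * k) (fun u => (c k)⁻¹ * p k u) ⟨?_, ?_, ?_⟩ _ ?_
      · exact contDiff_const.mul (hps k)
      · intro y hy; simp only []; rw [hpz k y hy, mul_zero]
      · intro j hj y
        rw [iteratedDeriv_const_mul_field, abs_mul, abs_of_pos (inv_pos.2 (hcpos k)), inv_mul_le_iff₀ (hcpos k), mul_one]
        exact hpb k j hj y
      · intro y
        show (c k)⁻¹ * Q k y = _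
        rw [hQa]; simp only [hq]; ring
    rw [map_smul, smul_eq_mul, abs_mul, abs_of_pos (inv_pos.2 (hcpos k)), inv_mul_le_iff₀ (hcpos k)] at h1
    exact h1
  set Ψ : ℕ → SchwartzMap ℝ ℝ := fun m => ∑ i ∈ Finset.range (2 * m + 1), Q ((i:ℤ) - m) with hΨ
  set W : ℕ → ℝ → ℝ := fun m u => Real.smoothTransition (u + (m + 1)) - Real.smoothTransition (u - m) - 1 with hW
  set η : ℕ → ℝ → ℝ := fun m y => W m (lam⁻¹ * (y - x)) with hη
  have hST : ContDiff ℝ (⊤ : ℕ∞) Real.smoothTransition := Real.smoothTransition.contDiff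
  have hW1 : ∀ m : ℕ, ContDiff ℝ (⊤ : ℕ∞) (fun u => Real.smoothTransition (u + ((m:ℝ) + 1))) := fun m =>
    hST.comp (contDiff_id.add contDiff_const)
  have hW2 : ∀ m : ℕ, ContDiff ℝ (⊤ : ℕ∞) (fun u => Real.smoothTransition (u - (m:ℝ))) := fun m =>
    hST.comp (contDiff_id.sub contDiff_const)
  have hWs : ∀ m, ContDiff ℝ (⊤ : ℕ∞) (W m) := fun m => ((hW1 m).sub (hW2 m)).sub contDiff_const
  have hWb : ∀ l : ℕ, ∃ B, ∀ m u, |iteratedDeriv l (W m) u| ≤ B := by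
    intro l
    obtain ⟨B, hB⟩ := aux_smoothT_bound l
    refine ⟨B + B + 1, fun m u => ?_⟩
    have e1 : iteratedDeriv l (W m) u = iteratedDeriv l Real.smoothTransition (u + (m + 1)) - iteratedDeriv l Real.smoothTransition (u - m) - iteratedDeriv l (fun _ : ℝ => (1:ℝ)) u := by
      have hle : (l : WithTop ℕ∞) ≤ ((⊤ : ℕ∞) : WithTop ℕ∞) := by exact_mod_cast le_top
      have a1 := iteratedDeriv_fun_sub (n := l) (x := u) (((hW1 m).sub (hW2 m)).contDiffAt.of_le hle) ((contDiff_const (c := (1:ℝ))).contDiffAt)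
      have a2 := iteratedDeriv_fun_sub (n := l) (x := u) ((hW1 m).contDiffAt.of_le hle) ((hW2 m).contDiffAt.of_le hle)
      rw [iteratedDeriv_comp_add_const, iteratedDeriv_comp_sub_const] at a2
      rw [a2] at a1
      exact a1
    rw [e1]
    have e2 : |iteratedDeriv l (fun _ : ℝ => (1:ℝ)) u| ≤ 1 := by
      rw [iteratedDeriv_const]; split_ifs <;> simp
    refine (abs_sub _ _).trans (add_le_add ((abs_sub _ _).trans (add_le_add (hB _) (hB _))) e2)
  have hT : Tendsto Ψ atTop (𝓝 Φ) := by
    refine aux_cutoff Φ η (fun m => ?_) ?_ lam |x| hlam ?_ Ψ ?_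
    · exact (hWs m).comp (contDiff_const.mul (contDiff_id.sub contDiff_const))
    · intro l
      obtain ⟨B, hB⟩ := hWb l
      refine ⟨lam⁻¹ ^ l * B, fun m y => ?_⟩
      simp only [hη]
      rw [aux_affine_iter _ (hWs m), abs_mul, abs_of_pos (by positivity)]
      gcongr
      exact hB _ _
    · intro m y hy
      have h1 : |y - x| < lam * m := by
        have := abs_sub y x
        linarith
      rw [abs_lt] at h1
      have h2 : -(m:ℝ) < lam⁻¹ * (y - x) := by
        rw [inv_mul_eq_div, lt_div_iff₀ hlam]; linarith
      have h3 : lam⁻¹ * (y - x) < m := by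
        rw [inv_mul_eq_div, div_lt_iff₀ hlam]; linarith
      simp only [hη, hW]
      rw [Real.smoothTransition.one_of_one_le (by linarith), Real.smoothTransition.zero_of_nonpos (by linarith)]
      norm_num
    · intro m y
      have e1 : Ψ m y = ∑ i ∈ Finset.range (2 * m + 1), q ((i:ℤ) - m) y := by
        simp only [hΨ]
        rw [sum_apply]
        rfl
      set u := lam⁻¹ * (y - x) with hu
      have e2 : ∀ i ∈ Finset.range (2 * m + 1), q ((i:ℤ) - m) y = Φ y * (Real.smoothTransition (u + (m + 1) - (i:ℕ)) - Real.smoothTransition (u + (m + 1) - ((i + 1 : ℕ) : ℝ))) := by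
        intro i _
        rw [hΦ y]
        simp only [hq, hp, psiB]
        have : lam⁻¹ * (y - (x + lam * (((i:ℤ) - (m:ℤ) : ℤ) : ℝ))) = u - (i - m) := by
          rw [hu]; push_cast; field_simp; ring
        rw [this, ← hu]
        push_cast
        rw [show u - ((i:ℝ) - m) + (i - m) = u by ring, show u - ((i:ℝ) - m) + 1 = u + (m + 1) - i by ring,
          show u - ((i:ℝ) - m) = u + (m + 1) - (i + 1) by ring]
        ring
      rw [e1, Finset.sum_congr rfl e2, ← Finset.mul_sum, Finset.sum_range_sub' (fun i : ℕ => Real.smoothTransition (u + (m + 1) - (i:ℝ)))]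
      simp only [hη, hW, ← hu]
      push_cast
      rw [show u + ((m:ℝ) + 1) - (2 * m + 1) = u - m by ring, sub_zero]
      ring
  have hT2 : Tendsto (fun m => |L (Ψ m)|) atTop (𝓝 |L Φ|) :=
    ((L.continuous.tendsto Φ).comp hT).abs
  refine le_of_tendsto hT2 (Eventually.of_forall fun m => ?_)
  simp only [hΨ]
  rw [map_sum]
  refine (Finset.abs_sum_le_sum_abs _ _).trans ?_
  refine (Finset.sum_le_sum fun i _ => hLQ _).trans ?_
  have hinj : Function.Injective (fun i : ℕ => (i:ℤ) - (m:ℤ)) := fun a b h => by simpa using h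
  have hs1 : ∑ i ∈ Finset.range (2 * m + 1), (1 + (((i:ℤ) - m : ℤ) : ℝ)^2)⁻¹ ≤ Z := by
    rw [← Finset.sum_image (f := fun k : ℤ => (1 + (k:ℝ)^2)⁻¹) (g := fun i : ℕ => (i:ℤ) - (m:ℤ)) (hinj.injOn)]
    exact hsum.sum_le_tsum _ (fun k _ => by positivity)
  calc ∑ i ∈ Finset.range (2 * m + 1), c ((i:ℤ) - m) * M 
      = (∑ i ∈ Finset.range (2 * m + 1), (1 + (((i:ℤ) - m : ℤ) : ℝ)^2)⁻¹) * (3 * 2 ^ r * B * N * M) := by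
        rw [Finset.sum_mul]; refine Finset.sum_congr rfl fun i _ => ?_
        simp only [hc]; ring
    _ ≤ Z * (3 * 2 ^ r * B * N * M) := by gcongr
    _ = _ := by ring

lemma aux_F_bounds (F : SchwartzMap ℝ ℝ) (n r : ℕ) : ∃ N : ℝ, 0 < N ∧
    (∀ j ≤ r, ∀ u, (1 + u ^ 2) * |iteratedDeriv j F u| ≤ N) ∧
    (∀ j ≤ r, ∀ a, |a| ≤ 1 → ∀ u, (1 + u ^ 2) * |iteratedDeriv j F (u - a) - iteratedDeriv j F u| ≤ N * |a|) ∧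
    (∀ j ≤ r, ∀ c ∈ Set.Icc (1/2 : ℝ) 1, ∀ u,
      (1 + u ^ 2) * |c ^ (n + 1 + j) * iteratedDeriv j F (c * u) - iteratedDeriv j F u| ≤ N * (1 - c)) := by
  set S : ℕ → ℕ → ℝ := fun k i => SchwartzMap.seminorm ℝ k i F with hS
  have hS0 : ∀ k i, 0 ≤ S k i := fun k i => apply_nonneg _ _
  have hSb : ∀ k i u, |u| ^ k * |iteratedDeriv i F u| ≤ S k i := fun k i u => SchwartzMap.le_seminorm' ℝ k i F u
  set M := 1 + ∑ i ∈ Finset.range (r+2), (S 0 i + S 1 i + S 2 i + S 3 i) with hM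
  have hMi : ∀ i ≤ r + 1, S 0 i + S 1 i + S 2 i + S 3 i ≤ M := by
    intro i hi
    have := Finset.single_le_sum (s := Finset.range (r+2)) (f := fun i => S 0 i + S 1 i + S 2 i + S 3 i)
      (fun i _ => by have := hS0 0 i; have := hS0 1 i; have := hS0 2 i; have := hS0 3 i; positivity) (a := i) (by simp; omega)
    linarith
  have hM0 : 0 < M := by
    have : 0 ≤ ∑ i ∈ Finset.range (r+2), (S 0 i + S 1 i + S 2 i + S 3 i) := Finset.sum_nonneg
      (fun i _ => by have := hS0 0 i; have := hS0 1 i; have := hS0 2 i; have := hS0 3 i; positivity)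
    linarith
  have h1 : ∀ i ≤ r + 1, ∀ u, (1 + u^2) * |iteratedDeriv i F u| ≤ M := by
    intro i hi u
    have a0 := hSb 0 i u
    have a2 := hSb 2 i u
    rw [sq_abs] at a2
    have := hMi i hi
    have := hS0 1 i; have := hS0 3 i
    rw [pow_zero] at a0
    linarith
  have h2 : ∀ i ≤ r + 1, ∀ u, (1 + u^2) * (|u| * |iteratedDeriv i F u|) ≤ M := by
    intro i hi u
    have a0 := hSb 1 i u
    have a2 := hSb 3 i u
    have := hMi i hi
    have := hS0 0 i; have := hS0 2 i
    have e : |u|^3 = u^2 * |u| := by rw [pow_succ, sq_abs]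
    rw [e] at a2
    rw [pow_one] at a0
    linarith
  have hd : ∀ i u, HasDerivAt (iteratedDeriv i F) (iteratedDeriv (i+1) F u) u := by
    intro i u
    rw [iteratedDeriv_succ]
    exact ((F.smooth ⊤).differentiable_iteratedDeriv i (by exact_mod_cast WithTop.coe_lt_top _) u).hasDerivAt
  refine ⟨4 * (n + 1 + r) * M + 8 * M, by positivity, ?_, ?_, ?_⟩
  · intro j hj u
    refine (h1 j (by omega) u).trans ?_
    have : 0 ≤ 4 * ((n:ℝ) + 1 + r) * M := by positivity
    linarith
  · intro j hj a ha u
    have key : ∀ v ∈ Set.Icc (u - 1) (u + 1), ‖iteratedDeriv (j+1) F v‖ ≤ 3 * M / (1 + u^2) := by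
      intro v hv
      rw [le_div_iff₀ (by positivity), Real.norm_eq_abs]
      have h3 : 1 + u^2 ≤ 3 * (1 + v^2) := by
        obtain ⟨h4, h5⟩ := hv
        nlinarith [sq_nonneg (2 * v - u), sq_nonneg v, mul_nonneg (sub_nonneg.2 h4) (sub_nonneg.2 h5)]
      have := h1 (j+1) (by omega) v
      nlinarith [abs_nonneg (iteratedDeriv (j+1) F v)]
    have := (convex_Icc (u-1) (u+1)).norm_image_sub_le_of_norm_hasDerivWithin_le (f := iteratedDeriv j F)
      (fun v _ => (hd j v).hasDerivWithinAt) key (x := u) (y := u - a) (by constructor <;> linarith)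
      (by rw [abs_le] at ha; constructor <;> linarith [ha.1, ha.2])
    rw [Real.norm_eq_abs, Real.norm_eq_abs, show u - a - u = -a by ring, abs_neg, div_mul_eq_mul_div, le_div_iff₀ (by positivity)] at this
    have h7 : 0 ≤ 4 * ((n:ℝ) + 1 + r) * M * |a| := by positivity
    have h8 : 0 ≤ M * |a| := by positivity
    linarith
  · intro j hj c hc u
    have key : ∀ v ∈ Set.Icc (1/2:ℝ) 1, ‖((n + 1 + j : ℕ) : ℝ) * v ^ (n + 1 + j - 1) * iteratedDeriv j F (v * u) + v ^ (n + 1 + j) * (iteratedDeriv (j+1) F (v * u) * u)‖ ≤ (4 * (n + 1 + r) * M + 8 * M) / (1 + u^2) := by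
      intro v hv
      obtain ⟨h4, h5⟩ := hv
      have hv0 : 0 < v := by linarith
      have h3 : 1 + u^2 ≤ 4 * (1 + (v * u)^2) := by
        have : 1/4 ≤ v^2 := by nlinarith
        nlinarith [sq_nonneg u]
      have h6 : |u| ≤ 2 * |v * u| := by
        rw [abs_mul, abs_of_pos hv0]; nlinarith [abs_nonneg u]
      have p1 : v ^ (n + 1 + j - 1) ≤ 1 := pow_le_one₀ hv0.le h5
      have p2 : v ^ (n + 1 + j) ≤ 1 := pow_le_one₀ hv0.le h5
      have p3 : ((n + 1 + j : ℕ) : ℝ) ≤ n + 1 + r := by push_cast; gcongr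
      rw [le_div_iff₀ (by positivity), Real.norm_eq_abs]
      have b1 := h1 j (by omega) (v * u)
      have b2 := h2 (j+1) (by omega) (v * u)
      set X := |iteratedDeriv j F (v * u)|
      set Y := |iteratedDeriv (j+1) F (v * u)|
      have hX : 0 ≤ X := abs_nonneg _
      have hY : 0 ≤ Y := abs_nonneg _
      have q1 : |((n + 1 + j : ℕ) : ℝ) * v ^ (n + 1 + j - 1) * iteratedDeriv j F (v * u)| ≤ (n + 1 + r) * X := by
        rw [abs_mul, abs_mul, abs_of_nonneg (by positivity : (0:ℝ) ≤ ((n + 1 + j : ℕ) : ℝ)), abs_of_nonneg (by positivity : (0:ℝ) ≤ v ^ (n + 1 + j - 1))]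
        calc _ ≤ ((n:ℝ) + 1 + r) * 1 * X := by gcongr
          _ = _ := by ring
      have q2 : |v ^ (n + 1 + j) * (iteratedDeriv (j+1) F (v * u) * u)| ≤ 2 * (|v * u| * Y) := by
        rw [abs_mul, abs_mul, abs_of_nonneg (by positivity : (0:ℝ) ≤ v ^ (n + 1 + j))]
        calc _ ≤ 1 * (Y * (2 * |v * u|)) := by gcongr
          _ = _ := by ring
      calc _ ≤ ((n + 1 + r) * X + 2 * (|v * u| * Y)) * (1 + u^2) := by
            gcongr; exact (abs_add_le _ _).trans (add_le_add q1 q2)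
        _ ≤ ((n + 1 + r) * X + 2 * (|v * u| * Y)) * (4 * (1 + (v * u)^2)) := by gcongr
        _ = 4 * (n + 1 + r) * ((1 + (v * u)^2) * X) + 8 * ((1 + (v * u)^2) * (|v * u| * Y)) := by ring
        _ ≤ _ := by gcongr
    have hder : ∀ v ∈ Set.Icc (1/2:ℝ) 1, HasDerivWithinAt (fun v => v ^ (n + 1 + j) * iteratedDeriv j F (v * u))
      (((n + 1 + j : ℕ) : ℝ) * v ^ (n + 1 + j - 1) * iteratedDeriv j F (v * u) + v ^ (n + 1 + j) * (iteratedDeriv (j+1) F (v * u) * u)) (Set.Icc (1/2:ℝ) 1) v := by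
      intro v _
      have d1 := hasDerivAt_pow (n + 1 + j) v
      have d2 : HasDerivAt (fun v => iteratedDeriv j F (v * u)) (iteratedDeriv (j+1) F (v * u) * u) v := by
        have := (hd j (v * u)).comp v ((hasDerivAt_id v).mul_const u)
        simpa [Function.comp_def] using this
      exact (d1.mul d2).hasDerivWithinAt
    have := (convex_Icc (1/2:ℝ) 1).norm_image_sub_le_of_norm_hasDerivWithin_le hder key (x := 1) (y := c) (by norm_num) hc
    simp only [one_pow, one_mul] at this
    rw [Real.norm_eq_abs, Real.norm_eq_abs, abs_sub_comm c 1, abs_of_nonneg (sub_nonneg.2 hc.2), div_mul_eq_mul_div, le_div_iff₀ (by positivity)] at this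
    linarith

lemma aux_heat_smooth : ContDiff ℝ (⊤ : ℕ∞) (fun u => heatKernel 1 u) := by
  unfold heatKernel
  simp only [zero_lt_one, if_true]
  fun_prop

lemma aux_heat (n : ℕ) (τ z : ℝ) (hτ : 0 < τ) : iteratedDeriv n (fun u => heatKernel τ u) z =
    (√τ)⁻¹ ^ (n + 1) * iteratedDeriv n (fun u => heatKernel 1 u) ((√τ)⁻¹ * z) := by
  have h : (fun u => heatKernel τ u) = fun u => (√τ)⁻¹ * (fun u => heatKernel 1 ((√τ)⁻¹ * u)) u := by
    ext u
    simp only [heatKernel, hτ, zero_lt_one, if_true]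
    rw [Real.mul_rpow (by positivity) hτ.le, mul_one, mul_pow, inv_pow, Real.sq_sqrt hτ.le]
    have : τ ^ (-(1:ℝ)/2) = (√τ)⁻¹ := by
      rw [Real.sqrt_eq_rpow, ← Real.rpow_neg hτ.le]; norm_num
    rw [this]
    have e : -(τ⁻¹ * u^2) / (4 * 1) = -u^2 / (4 * τ) := by field_simp
    rw [e]; ring
  rw [h, iteratedDeriv_const_mul_field, iteratedDeriv_comp_const_mul (aux_heat_smooth.of_le (by exact_mod_cast le_top))]
  ring

lemma aux_kernel (β : ℝ) (n r : ℕ) (hn : β ≤ (n:ℝ)) : ∃ A : ℝ, 0 < A ∧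
    ∀ PK : ℝ → ℝ → SchwartzMap ℝ ℝ,
    (∀ t x y : ℝ, PK t x y = iteratedDeriv n (fun u => heatKernel t u) (x - y)) →
    ∀ (L : SchwartzMap ℝ ℝ →L[ℝ] ℝ) (M : ℝ), 0 ≤ M →
    (∀ x lam : ℝ, lam ∈ Set.Ioc (0 : ℝ) 1 → ∀ φ : ℝ → ℝ, IsTestFunction r φ →
      ∀ Φ : SchwartzMap ℝ ℝ, (∀ y : ℝ, Φ y = lam⁻¹ * φ (lam⁻¹ * (y - x))) → |L Φ| ≤ M * lam ^ β) →
    ∀ τ x : ℝ, 0 < τ → τ ≤ 1 → |L (PK τ x)| ≤ A * M * τ ^ ((β - n) / 2) ∧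
      ∀ δ xb h : ℝ, 0 ≤ δ → τ + δ ≤ 1 → 0 < h → √δ ≤ h → |xb - x| ≤ h →
        |L (PK (τ + δ) xb) - L (PK τ x)| ≤ A * M * τ ^ ((β - n) / 2) * (h / √τ) := by
  by_cases hF : ∃ F : SchwartzMap ℝ ℝ, ∀ u, F u = iteratedDeriv n (fun u => heatKernel 1 u) (-u)
  swap
  · refine ⟨1, one_pos, fun PK hPK => ?_⟩
    exact absurd ⟨PK 1 0, fun u => by rw [hPK, zero_sub]⟩ hF
  obtain ⟨F, hF⟩ := hF
  obtain ⟨N, hN, hN1, hN2, hN3⟩ := aux_F_bounds F n r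
  obtain ⟨K, hK, hK1⟩ := aux_pair r
  refine ⟨2 * (K * N), by positivity, ?_⟩
  intro PK hPK L M hM hL
  have hform : ∀ τ x y, 0 < τ → PK τ x y = (√τ)⁻¹ ^ (n + 1) * F ((√τ)⁻¹ * (y - x)) := by
    intro τ x y hτ
    rw [hPK, aux_heat n τ _ hτ, hF]
    congr 2; ring
  have hFs : ContDiff ℝ (⊤ : ℕ∞) F := F.smooth _
  have hle : ∀ l : ℕ, (l : WithTop ℕ∞) ≤ ((⊤ : ℕ∞) : WithTop ℕ∞) := fun l => by exact_mod_cast le_top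
  -- general estimate
  have gen : ∀ τ x, 0 < τ → τ ≤ 1 → ∀ g : ℝ → ℝ, ContDiff ℝ (⊤ : ℕ∞) g → ∀ N' : ℝ, 0 < N' →
      (∀ j ≤ r, ∀ u, (1 + u ^ 2) * |iteratedDeriv j g u| ≤ N') →
      ∀ Φ : SchwartzMap ℝ ℝ, (∀ y, Φ y = (√τ)⁻¹ ^ (n + 1) * g ((√τ)⁻¹ * (y - x))) →
      |L Φ| ≤ K * N' * M * τ ^ ((β - n) / 2) := by
    intro τ x hτ hτ1 g hg N' hN' hgN Φ hΦ
    have hs : 0 < √τ := Real.sqrt_pos.2 hτ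
    have hs1 : √τ ≤ 1 := Real.sqrt_le_one.2 hτ1
    have := hK1 L x (√τ) (M * (√τ) ^ β) hs (by positivity) (fun x φ hφ Φ hΦ => hL x _ ⟨hs, hs1⟩ φ hφ Φ hΦ) g hg N' hN' hgN
      ((√τ) ^ n • Φ) (fun y => by
        show (√τ)^n * Φ y = _
        rw [hΦ, pow_succ, inv_pow]; field_simp)
    rw [map_smul, smul_eq_mul, abs_mul, abs_of_pos (by positivity)] at this
    have e : τ ^ ((β - n) / 2) = (√τ) ^ β / (√τ) ^ n := by
      rw [← Real.rpow_natCast, ← Real.rpow_sub hs, Real.sqrt_eq_rpow, ← Real.rpow_mul hτ.le]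
      congr 1; ring
    rw [e, ← mul_div_assoc, le_div_iff₀ (by positivity)]
    linarith
  have k1 : ∀ τ x, 0 < τ → τ ≤ 1 → |L (PK τ x)| ≤ K * N * M * τ ^ ((β - n) / 2) := fun τ x hτ hτ1 =>
    gen τ x hτ hτ1 F hFs N hN hN1 _ (fun y => hform τ x y hτ)
  intro τ x hτ hτ1
  have hτb : 0 < τ ^ ((β - n) / 2) := by positivity
  refine ⟨(k1 τ x hτ hτ1).trans ?_, ?_⟩
  · have : 0 ≤ K * N * M * τ ^ ((β - n) / 2) := by positivity
    linarith
  intro δ xb h hδ hτδ hh hδh hxh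
  have hs : 0 < √τ := Real.sqrt_pos.2 hτ
  by_cases hcase : h ≤ √τ
  · set w := h / √τ with hw
    have hw0 : 0 < w := by positivity
    have hw1 : w ≤ 1 := (div_le_one hs).2 hcase
    -- time increment
    set c := √τ / √(τ + δ) with hc
    have hs' : 0 < √(τ + δ) := Real.sqrt_pos.2 (by linarith)
    have hc0 : 0 < c := by positivity
    have hc1 : c ≤ 1 := (div_le_one hs').2 (Real.sqrt_le_sqrt (by linarith))
    have hcsq : c ^ 2 = τ / (τ + δ) := by
      rw [hc, div_pow, Real.sq_sqrt hτ.le, Real.sq_sqrt (by linarith)]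
    have hδw : δ ≤ w ^ 2 * τ := by
      have : δ ≤ h ^ 2 := (Real.sqrt_le_left hh.le).1 hδh
      rw [hw, div_pow, Real.sq_sqrt hτ.le]; field_simp; exact this
    have hc2 : 1 - c ≤ w := by
      have h1 : c ^ 2 ≤ c := by nlinarith
      have h2 : 1 - w ^ 2 ≤ τ / (τ + δ) := by
        rw [le_div_iff₀ (by linarith)]
        nlinarith [sq_nonneg w, mul_nonneg (sq_nonneg w) hδ]
      nlinarith
    have hc3 : 1 / 2 ≤ c := by
      have h1 : c ^ 2 ≤ c := by nlinarith
      have h2 : 1/2 ≤ τ / (τ + δ) := by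
        rw [le_div_iff₀ (by linarith)]
        have h3 : w ^ 2 ≤ 1 := by nlinarith
        nlinarith
      linarith
    have t1 : |L (PK (τ + δ) xb) - L (PK τ xb)| ≤ K * (N * w) * M * τ ^ ((β - n) / 2) := by
      rw [← map_sub]
      refine gen τ xb hτ hτ1 (fun u => c ^ (n + 1) * F (c * u) - F u) ?_ (N * w) (by positivity) ?_ _ ?_
      · exact (contDiff_const.mul (hFs.comp (contDiff_const.mul contDiff_id))).sub hFs
      · intro j hj u
        have e : iteratedDeriv j (fun u => c ^ (n + 1) * F (c * u) - F u) u = c ^ (n + 1 + j) * iteratedDeriv j F (c * u) - iteratedDeriv j F u := by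
          rw [iteratedDeriv_fun_sub, iteratedDeriv_const_mul_field, iteratedDeriv_comp_const_mul (hFs.of_le (hle j))]
          · ring
          · exact (contDiff_const.mul (hFs.comp (contDiff_const.mul contDiff_id))).contDiffAt.of_le (hle j)
          · exact hFs.contDiffAt.of_le (hle j)
        rw [e]
        refine (hN3 j hj c ⟨hc3, hc1⟩ u).trans ?_
        gcongr
      · intro y
        show PK (τ + δ) xb y - PK τ xb y = _
        rw [hform _ _ _ hτ, hform _ _ _ (by linarith)]
        have e : (√(τ + δ))⁻¹ = c * (√τ)⁻¹ := by rw [hc]; field_simp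
        rw [e, mul_pow]
        rw [mul_assoc c]; ring
    have t2 : |L (PK τ xb) - L (PK τ x)| ≤ K * (N * w) * M * τ ^ ((β - n) / 2) := by
      rw [← map_sub]
      set a := (√τ)⁻¹ * (xb - x) with ha
      have haw : |a| ≤ w := by
        rw [ha, abs_mul, abs_of_pos (inv_pos.2 hs), hw, inv_mul_eq_div]; gcongr
      refine gen τ x hτ hτ1 (fun u => F (u - a) - F u) ?_ (N * w) (by positivity) ?_ _ ?_
      · exact (hFs.comp (contDiff_id.sub contDiff_const)).sub hFs
      · intro j hj u
        have e : iteratedDeriv j (fun u => F (u - a) - F u) u = iteratedDeriv j F (u - a) - iteratedDeriv j F u := by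
          rw [iteratedDeriv_fun_sub, iteratedDeriv_comp_sub_const]
          · exact (hFs.comp (contDiff_id.sub contDiff_const)).contDiffAt.of_le (hle j)
          · exact hFs.contDiffAt.of_le (hle j)
        rw [e]
        refine (hN2 j hj a (haw.trans hw1) u).trans ?_
        gcongr
      · intro y
        show PK τ xb y - PK τ x y = _
        rw [hform _ _ _ hτ, hform _ _ _ hτ, ha, ← mul_sub, ← mul_sub]
        congr 4; ring
    calc |L (PK (τ + δ) xb) - L (PK τ x)| ≤ |L (PK (τ + δ) xb) - L (PK τ xb)| + |L (PK τ xb) - L (PK τ x)| := abs_sub_le _ _ _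
      _ ≤ _ := add_le_add t1 t2
      _ = _ := by ring
  · push Not at hcase
    have hw1 : 1 ≤ h / √τ := (one_le_div hs).2 hcase.le
    have m1 : (τ + δ) ^ ((β - n) / 2) ≤ τ ^ ((β - n) / 2) :=
      Real.rpow_le_rpow_of_nonpos hτ (by linarith) (by linarith)
    have a1 := k1 (τ + δ) xb (by linarith) hτδ
    have a2 := k1 τ x hτ hτ1
    calc _ ≤ |L (PK (τ + δ) xb)| + |L (PK τ x)| := abs_sub _ _
      _ ≤ K * N * M * τ ^ ((β - n) / 2) + K * N * M * τ ^ ((β - n) / 2) := by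
          refine add_le_add (a1.trans ?_) a2
          gcongr
      _ = 2 * (K * N) * M * τ ^ ((β - n) / 2) * 1 := by ring
      _ ≤ _ := by gcongr

lemma aux_kernel2 (β : ℝ) (n r : ℕ) (hn : β ≤ (n:ℝ)) (κ : ℝ) (hκ0 : 0 ≤ κ) (hκ1 : κ ≤ 1) : ∃ A : ℝ, 0 < A ∧
    ∀ PK : ℝ → ℝ → SchwartzMap ℝ ℝ,
    (∀ t x y : ℝ, PK t x y = iteratedDeriv n (fun u => heatKernel t u) (x - y)) →
    ∀ (L : SchwartzMap ℝ ℝ →L[ℝ] ℝ) (M : ℝ), 0 ≤ M →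
    (∀ x lam : ℝ, lam ∈ Set.Ioc (0 : ℝ) 1 → ∀ φ : ℝ → ℝ, IsTestFunction r φ →
      ∀ Φ : SchwartzMap ℝ ℝ, (∀ y : ℝ, Φ y = lam⁻¹ * φ (lam⁻¹ * (y - x))) → |L Φ| ≤ M * lam ^ β) →
    ∀ τ x : ℝ, 0 < τ → τ ≤ 1 → |L (PK τ x)| ≤ A * M * τ ^ ((β - n) / 2) ∧
      ∀ δ xb h : ℝ, 0 ≤ δ → τ + δ ≤ 1 → 0 < h → √δ ≤ h → |xb - x| ≤ h →
        |L (PK (τ + δ) xb) - L (PK τ x)| ≤ A * M * τ ^ ((β - n) / 2) * (h / √τ) ∧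
        |L (PK (τ + δ) xb) - L (PK τ x)| ≤ A * M * h ^ κ * τ ^ ((β - n - κ) / 2) := by
  obtain ⟨A, hA, H⟩ := aux_kernel β n r hn
  refine ⟨2 * A, by positivity, ?_⟩
  intro PK hPK L M hM hL τ x hτ hτ1
  have h1 := H PK hPK L M hM hL τ x hτ hτ1
  have hτb : 0 < τ ^ ((β - n) / 2) := by positivity
  have hY : 0 ≤ A * M * τ ^ ((β - n) / 2) := by positivity
  refine ⟨by linarith [h1.1], ?_⟩
  intro δ xb h hδ hτδ hh hδh hxh
  have h2 := h1.2 δ xb h hδ hτδ hh hδh hxh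
  have hs : 0 < √τ := Real.sqrt_pos.2 hτ
  have hw : 0 < h / √τ := by positivity
  refine ⟨h2.trans (by gcongr; linarith), ?_⟩
  have e : 2 * A * M * h ^ κ * τ ^ ((β - n - κ) / 2) = 2 * (A * M * τ ^ ((β - n) / 2)) * (h / √τ) ^ κ := by
    rw [Real.div_rpow hh.le hs.le, sub_div, Real.rpow_sub hτ, Real.sqrt_eq_rpow, ← Real.rpow_mul hτ.le]
    rw [show 1 / 2 * κ = κ / 2 by ring]; ring
  rw [e]
  by_cases hw1 : h / √τ ≤ 1
  · have h3 : h / √τ ≤ (h / √τ) ^ κ := by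
      have := Real.rpow_le_rpow_of_exponent_ge hw hw1 hκ1
      rwa [Real.rpow_one] at this
    calc _ ≤ _ := h2
      _ ≤ 1 * (A * M * τ ^ ((β - n) / 2)) * (h / √τ) := by linarith
      _ ≤ _ := by gcongr; norm_num
  · push Not at hw1
    have h3 : 1 ≤ (h / √τ) ^ κ := Real.one_le_rpow hw1.le hκ0
    have m1 : (τ + δ) ^ ((β - n) / 2) ≤ τ ^ ((β - n) / 2) :=
      Real.rpow_le_rpow_of_nonpos hτ (by linarith) (by linarith)
    have a1 := (H PK hPK L M hM hL (τ + δ) xb (by linarith) hτδ).1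
    calc _ ≤ |L (PK (τ + δ) xb)| + |L (PK τ x)| := abs_sub _ _
      _ ≤ A * M * τ ^ ((β - n) / 2) + A * M * τ ^ ((β - n) / 2) := by
          refine add_le_add (a1.trans ?_) h1.1
          gcongr
      _ = 2 * (A * M * τ ^ ((β - n) / 2)) * 1 := by ring
      _ ≤ _ := by gcongr

lemma aux_ii (a t : ℝ) (ha : -1 < a) (ht : 0 < t) :
    IntegrableOn (fun s : ℝ => s ^ a) (Set.Ioo 0 t) ∧ ∫ s in Set.Ioo 0 t, s ^ a = t ^ (a + 1) / (a + 1) := by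
  have h1 := intervalIntegral.intervalIntegrable_rpow' (a := 0) (b := t) ha
  rw [intervalIntegrable_iff_integrableOn_Ioo_of_le ht.le] at h1
  refine ⟨h1, ?_⟩
  rw [← integral_Ioc_eq_integral_Ioo, ← intervalIntegral.integral_of_le ht.le, integral_rpow (Or.inl ha),
    Real.zero_rpow (by linarith), sub_zero]

lemma aux_ii2 (a t0 t : ℝ) (ha : -1 < a) (ht : t0 < t) :
    IntegrableOn (fun s : ℝ => (t - s) ^ a) (Set.Ioo t0 t) ∧
      ∫ s in Set.Ioo t0 t, (t - s) ^ a = (t - t0) ^ (a + 1) / (a + 1) := by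
  have h1 := (intervalIntegral.intervalIntegrable_rpow' (a := t - t0) (b := 0) ha).comp_sub_left t
  rw [show t - (t - t0) = t0 by ring, sub_zero, intervalIntegrable_iff_integrableOn_Ioo_of_le ht.le] at h1
  refine ⟨h1, ?_⟩
  rw [← integral_Ioc_eq_integral_Ioo, ← intervalIntegral.integral_of_le ht.le,
    intervalIntegral.integral_comp_sub_left (fun s => s ^ a), integral_rpow (Or.inl ha), sub_self,
    Real.zero_rpow (by linarith), sub_zero]

lemma aux_int (a b : ℝ) (ha : -1 < a) (ha0 : a ≤ 0) (hb : -1 < b) (hb0 : b ≤ 0) :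
    ∃ D : ℝ, 0 < D ∧ ∀ t : ℝ, 0 < t → ∀ (f : ℝ → ℝ) (Y : ℝ), 0 ≤ Y →
      (∀ s ∈ Set.Ioo 0 t, |f s| ≤ Y * (s ^ a * (t - s) ^ b)) →
      |∫ s in Set.Ioo 0 t, f s| ≤ Y * (D * t ^ (a + b + 1)) ∧
      (AEStronglyMeasurable f (volume.restrict (Set.Ioo 0 t)) → IntegrableOn f (Set.Ioo 0 t)) := by
  refine ⟨(1/2) ^ b / (a + 1) + (1/2) ^ a / (b + 1), ?_, ?_⟩
  · have : 0 < a + 1 := by linarith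
    have : 0 < b + 1 := by linarith
    positivity
  intro t ht f Y hY hf
  obtain ⟨i1, e1⟩ := aux_ii a t ha ht
  obtain ⟨i2, e2⟩ := aux_ii2 b 0 t hb ht
  set G : ℝ → ℝ := fun s => Y * ((t/2) ^ b * s ^ a + (t/2) ^ a * (t - s) ^ b) with hG
  have hGi : IntegrableOn G (Set.Ioo 0 t) := ((i1.const_mul _).add (i2.const_mul _)).const_mul _
  have hGe : ∫ s in Set.Ioo 0 t, G s = Y * (((1/2) ^ b / (a + 1) + (1/2) ^ a / (b + 1)) * t ^ (a + b + 1)) := by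
    simp only [hG]
    rw [integral_const_mul, integral_add (i1.const_mul _) (i2.const_mul _), integral_const_mul, integral_const_mul, e1, e2, sub_zero]
    rw [show t / 2 = t * (1/2) by ring, Real.mul_rpow ht.le (by norm_num), Real.mul_rpow ht.le (by norm_num)]
    rw [show a + b + 1 = b + (a + 1) by ring, Real.rpow_add ht b (a + 1)]
    have : t ^ a * t ^ (b + 1) = t ^ b * t ^ (a + 1) := by
      rw [← Real.rpow_add ht, ← Real.rpow_add ht]; congr 1; ring
    have e : t ^ a * (1/2) ^ a * (t ^ (b+1) / (b+1)) = (t ^ a * t ^ (b + 1)) * ((1/2) ^ a / (b+1)) := by ring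
    rw [e, this]; ring
  have hle : ∀ᵐ s ∂(volume.restrict (Set.Ioo 0 t)), ‖f s‖ ≤ G s := by
    refine (ae_restrict_iff' measurableSet_Ioo).2 (Eventually.of_forall fun s hs => ?_)
    refine (hf s hs).trans ?_
    simp only [hG]
    refine mul_le_mul_of_nonneg_left ?_ hY
    obtain ⟨h1, h2⟩ := hs
    have h3 : 0 < t - s := by linarith
    have h4 : 0 < t / 2 := by linarith
    rcases le_total s (t/2) with h | h
    · have := Real.rpow_le_rpow_of_nonpos (x := t/2) (y := t - s) (z := b) h4 (by linarith) hb0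
      have p1 : 0 ≤ (t/2) ^ a * (t - s) ^ b := by positivity
      have p2 : 0 ≤ s ^ a := by positivity
      nlinarith
    · have := Real.rpow_le_rpow_of_nonpos (x := t/2) (y := s) (z := a) h4 h ha0
      have p1 : 0 ≤ (t/2) ^ b * s ^ a := by positivity
      have p2 : 0 ≤ (t - s) ^ b := by positivity
      nlinarith
  refine ⟨?_, fun hm => Integrable.mono' hGi hm hle⟩
  have := norm_integral_le_of_norm_le hGi hle
  rw [hGe] at this
  exact this

lemma aux_int2 (b t0 t : ℝ) (hb : -1 < b) (ht : t0 < t) (f : ℝ → ℝ) (Y : ℝ)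
    (hf : ∀ s ∈ Set.Ico t0 t, |f s| ≤ Y * (t - s) ^ b) :
    |∫ s in Set.Ico t0 t, f s| ≤ Y * ((t - t0) ^ (b + 1) / (b + 1)) := by
  obtain ⟨i, e⟩ := aux_ii2 b t0 t hb ht
  rw [integral_Ico_eq_integral_Ioo, ← e, ← integral_const_mul]
  refine norm_integral_le_of_norm_le (f := f) (i.const_mul Y) ?_
  exact (ae_restrict_iff' measurableSet_Ioo).2 (Eventually.of_forall fun s hs => hf s ⟨hs.1.le, hs.2⟩)

lemma aux_meas (ζ : ℝ → (SchwartzMap ℝ ℝ →L[ℝ] ℝ)) (hζ : ∀ φ : SchwartzMap ℝ ℝ, Measurable fun s => ζ s φ)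
    (P : ℝ → SchwartzMap ℝ ℝ) (t t1 : ℝ) (htt : t1 ≤ t)
    (H : ∀ s ∈ Set.Ioo 0 t1, ∃ c : ℝ, ∀ δ h : ℝ, 0 ≤ δ → t - s + δ ≤ t → 0 < h → √δ ≤ h →
      |ζ s (P (t - s + δ)) - ζ s (P (t - s))| ≤ c * h) :
    AEStronglyMeasurable (fun s => ζ s (P (t - s))) (volume.restrict (Set.Ioo 0 t1)) := by
  apply AEMeasurable.aestronglyMeasurable
  set f : ℕ → ℝ → ℝ := fun m s => ζ s (P (t - (⌊s * (m + 1)⌋ : ℝ) / (m + 1))) with hf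
  refine aemeasurable_of_tendsto_metrizable_ae (u := atTop) (f := f) ?_ ?_
  · intro m
    apply Measurable.aemeasurable
    have h1 : Measurable (fun p : ℤ × ℝ => ζ p.2 (P (t - (p.1 : ℝ) / (m + 1)))) := by
      apply measurable_from_prod_countable_right
      intro k
      exact hζ (P (t - (k:ℝ) / (m + 1)))
    exact h1.comp ((Int.measurable_floor.comp (measurable_id.mul_const _)).prodMk measurable_id)
  · refine (ae_restrict_iff' measurableSet_Ioo).2 (Eventually.of_forall fun s hs => ?_)
    obtain ⟨c, hc⟩ := H s hs
    rw [tendsto_iff_norm_sub_tendsto_zero]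
    have hlim : Tendsto (fun m : ℕ => c * √(1 / ((m:ℝ) + 1))) atTop (𝓝 0) := by
      have := (Real.continuous_sqrt.tendsto 0).comp tendsto_one_div_add_atTop_nhds_zero_nat
      have := this.const_mul c
      simpa using this
    refine squeeze_zero (fun _ => norm_nonneg _) (fun m => ?_) hlim
    have hm : (0:ℝ) < m + 1 := by positivity
    set q := (⌊s * (m + 1)⌋ : ℝ) / (m + 1) with hq
    have q1 : q ≤ s := by
      rw [hq, div_le_iff₀ hm]; exact Int.floor_le _
    have q2 : s - q ≤ 1 / (m + 1) := by
      have := (Int.lt_floor_add_one (s * (m + 1))).le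
      rw [hq, le_div_iff₀ hm, sub_mul, div_mul_cancel₀ _ hm.ne']; linarith
    have q3 : 0 ≤ q := by
      have : 0 ≤ ⌊s * (m + 1)⌋ := Int.floor_nonneg.2 (mul_nonneg hs.1.le hm.le)
      have : (0:ℝ) ≤ (⌊s * (m + 1)⌋ : ℝ) := by exact_mod_cast this
      positivity
    have := hc (s - q) (√(1 / ((m:ℝ) + 1))) (by linarith) (by linarith) (by positivity) (Real.sqrt_le_sqrt q2)
    rw [show t - s + (s - q) = t - q by ring] at this
    exact this

/-- Schauder-type estimate for the space-time convolution of the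
`n`-th spatial derivative of the heat kernel with a distribution-valued
function of time.  Here `PK t x` is the Schwartz function `y ↦ P^{(n)}_t(x-y)`,
supplied as a hypothesis. -/
theorem statement2 (β ρ : ℝ) (n r : ℕ)
    (hβ : -2 < β) (hρ : ρ ∈ Set.Ioc (-2 : ℝ) 0)
    (hn1 : β + 1 ≤ (n : ℝ)) (hn2 : (n : ℝ) < β + 2) (hr : |β| < (r : ℝ))
    (θ₁ θ₂ : ℝ) (hθ₁ : θ₁ ∈ Set.Ioo 0 (β - (n : ℝ) + 2)) (hθ : 0 < θ₁ - θ₂) :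
    ∃ C' : ℝ, 0 < C' ∧
      ∀ T : ℝ, T ∈ Set.Ioc (0 : ℝ) 1 → ∀ C : ℝ, 0 < C →
      ∀ ζ : ℝ → (SchwartzMap ℝ ℝ →L[ℝ] ℝ),
        (∀ φ : SchwartzMap ℝ ℝ, Measurable fun s => ζ s φ) →
        ∀ PK : ℝ → ℝ → SchwartzMap ℝ ℝ,
        (∀ t x y : ℝ, PK t x y = iteratedDeriv n (fun u => heatKernel t u) (x - y)) →
        (∀ t : ℝ, t ∈ Set.Ioc (0 : ℝ) T → ∀ x : ℝ, ∀ lam : ℝ, lam ∈ Set.Ioc (0 : ℝ) 1 →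
          ∀ φ : ℝ → ℝ, IsTestFunction r φ →
          ∀ Φ : SchwartzMap ℝ ℝ, (∀ y : ℝ, Φ y = lam⁻¹ * φ (lam⁻¹ * (y - x))) →
          |ζ t Φ| ≤ C * lam ^ β * tnorm t ^ ρ) →
        (∀ t x : ℝ, t ∈ Set.Ioc (0 : ℝ) T →
          tnorm t ^ (-((ρ + θ₂) + (β + 2 - (n : ℝ) - θ₁))) *
            |∫ s in Set.Ioo (0 : ℝ) t, ζ s (PK (t - s) x)| ≤
            C' * C * T ^ ((θ₁ - θ₂) / 2)) ∧
        (∀ t x tb xb : ℝ, t ∈ Set.Ioc (0 : ℝ) T → tb ∈ Set.Ioc (0 : ℝ) T →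
          (tb, xb) ≠ (t, x) → |tb - t| ≤ tnorm2 t tb ^ 2 →
          |(∫ s in Set.Ioo (0 : ℝ) tb, ζ s (PK (tb - s) xb)) -
              ∫ s in Set.Ioo (0 : ℝ) t, ζ s (PK (t - s) x)| /
            (tnorm2 t tb ^ (ρ + θ₂) * pnormS (tb, xb) (t, x) ^ (β + 2 - (n : ℝ) - θ₁)) ≤
            C' * C * T ^ ((θ₁ - θ₂) / 2)) := by
  obtain ⟨hρ1, hρ0⟩ := hρ
  obtain ⟨hθ1, hθ2⟩ := hθ₁
  set κ := β + 2 - (n : ℝ) - θ₁ with hκ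
  have hκ0 : 0 < κ := by linarith
  have hκ1 : κ ≤ 1 := by linarith
  obtain ⟨A, hA, HA⟩ := aux_kernel2 β n r (by linarith) κ hκ0.le hκ1
  obtain ⟨D1, hD1, HD1⟩ := aux_int (ρ / 2) ((β - n) / 2) (by linarith) (by linarith) (by linarith) (by linarith)
  obtain ⟨D2, hD2, HD2⟩ := aux_int (ρ / 2) ((β - n - κ) / 2) (by linarith) (by linarith) (by linarith) (by linarith)
  set b := (β - n) / 2 with hb
  have hb1 : 0 < b + 1 := by linarith
  refine ⟨A * D1 + A * (D2 + 1 / (b + 1)), by positivity, ?_⟩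
  intro T hT C hC ζ hζ PK hPK hL
  obtain ⟨hT0, hT1⟩ := hT
  have htn : ∀ t : ℝ, 0 < t → t ≤ 1 → tnorm t = √t := by
    intro t h0 h1
    rw [tnorm, abs_of_pos h0, min_eq_left (Real.sqrt_le_one.2 h1)]
  have htp : ∀ t p : ℝ, 0 < t → t ≤ 1 → tnorm t ^ p = t ^ (p / 2) := by
    intro t p h0 h1
    rw [htn t h0 h1, Real.sqrt_eq_rpow, ← Real.rpow_mul h0.le]; congr 1; ring
  have hker : ∀ s ∈ Set.Ioc 0 T, ∀ τ x : ℝ, 0 < τ → τ ≤ 1 → |ζ s (PK τ x)| ≤ A * (C * s ^ (ρ / 2)) * τ ^ b ∧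
      ∀ δ xb h : ℝ, 0 ≤ δ → τ + δ ≤ 1 → 0 < h → √δ ≤ h → |xb - x| ≤ h →
        |ζ s (PK (τ + δ) xb) - ζ s (PK τ x)| ≤ A * (C * s ^ (ρ / 2)) * τ ^ b * (h / √τ) ∧
        |ζ s (PK (τ + δ) xb) - ζ s (PK τ x)| ≤ A * (C * s ^ (ρ / 2)) * h ^ κ * τ ^ ((β - n - κ) / 2) := by
    intro s hs
    have hs0 : 0 < s := hs.1
    refine HA PK hPK (ζ s) (C * s ^ (ρ / 2)) (by positivity) ?_
    intro x lam hlam φ hφ Φ hΦ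
    have := hL s hs x lam hlam φ hφ Φ hΦ
    rw [htp s ρ hs.1 (hs.2.trans hT1)] at this
    linarith
  have hmeas : ∀ t t1 x : ℝ, t1 ≤ t → t ≤ T →
      AEStronglyMeasurable (fun s => ζ s (PK (t - s) x)) (volume.restrict (Set.Ioo 0 t1)) := by
    intro t t1 x h1 h2
    refine aux_meas ζ hζ (fun τ => PK τ x) t t1 h1 ?_
    intro s hs
    refine ⟨A * (C * s ^ (ρ / 2)) * (t - s) ^ b / √(t - s), ?_⟩
    intro δ h hδ hδ2 hh hδh
    have := ((hker s ⟨hs.1, by linarith [hs.2]⟩ (t - s) x (by linarith [hs.2]) (by linarith [hs.1])).2 δ x h hδ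
      (by linarith) hh hδh (by simpa using hh.le)).1
    refine this.trans (le_of_eq ?_)
    ring
  have hbd : ∀ t x : ℝ, t ≤ T → ∀ s ∈ Set.Ioo 0 t, |ζ s (PK (t - s) x)| ≤ A * C * (s ^ (ρ / 2) * (t - s) ^ b) := by
    intro t x ht s hs
    have := (hker s ⟨hs.1, by linarith [hs.2]⟩ (t - s) x (by linarith [hs.2]) (by linarith [hs.1])).1
    linarith
  have hint : ∀ t x : ℝ, 0 < t → t ≤ T → IntegrableOn (fun s => ζ s (PK (t - s) x)) (Set.Ioo 0 t) := by
    intro t x h0 h1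
    exact (HD1 t h0 _ (A * C) (by positivity) (hbd t x h1)).2 (hmeas t t x le_rfl h1)
  have hincr : ∀ t tb x xb h : ℝ, 0 < t → t ≤ tb → tb ≤ T → tb - t ≤ t → 0 < h → √(tb - t) ≤ h → |xb - x| ≤ h →
      |(∫ s in Set.Ioo (0 : ℝ) tb, ζ s (PK (tb - s) xb)) - ∫ s in Set.Ioo (0 : ℝ) t, ζ s (PK (t - s) x)| ≤
        A * (D2 + 1 / (b + 1)) * C * (t ^ ((ρ + θ₁) / 2) * h ^ κ) := by
    intro t tb x xb h ht httb htb hdt hh hth hxh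
    have hhk : 0 < h ^ κ := by positivity
    have hsplit : Set.Ioo 0 tb = Set.Ioo 0 t ∪ Set.Ico t tb := (Set.Ioo_union_Ico_eq_Ioo ht httb).symm
    have hdisj : Disjoint (Set.Ioo 0 t) (Set.Ico t tb) := by
      rw [Set.disjoint_left]; intro s h1 h2; exact absurd h1.2 (not_lt.2 h2.1)
    have hib := hint tb xb (ht.trans_le httb) htb
    have hib1 : IntegrableOn (fun s => ζ s (PK (tb - s) xb)) (Set.Ioo 0 t) := hib.mono_set (by rw [hsplit]; exact Set.subset_union_left)
    have hib2 : IntegrableOn (fun s => ζ s (PK (tb - s) xb)) (Set.Ico t tb) := hib.mono_set (by rw [hsplit]; exact Set.subset_union_right)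
    rw [hsplit, setIntegral_union hdisj measurableSet_Ico hib1 hib2, add_sub_right_comm,
      ← integral_sub hib1 (hint t x ht (httb.trans htb))]
    have p1 : |∫ s in Set.Ioo 0 t, (ζ s (PK (tb - s) xb) - ζ s (PK (t - s) x))| ≤
        A * C * h ^ κ * (D2 * t ^ (ρ / 2 + (β - n - κ) / 2 + 1)) := by
      refine (HD2 t ht _ (A * C * h ^ κ) (by positivity) ?_).1
      intro s hs
      have := ((hker s ⟨hs.1, by linarith [hs.2]⟩ (t - s) x (by linarith [hs.2]) (by linarith [hs.1])).2 (tb - t) xb h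
        (by linarith) (by linarith [hs.1]) hh hth hxh).2
      rw [show t - s + (tb - t) = tb - s by ring] at this
      linarith
    have p2 : |∫ s in Set.Ico t tb, ζ s (PK (tb - s) xb)| ≤ A * C * (1 / (b + 1)) * (t ^ ((ρ + θ₁) / 2) * h ^ κ) := by
      rcases httb.eq_or_lt with heq | hlt
      · have h9 : 0 < tb := ht.trans_le httb
        rw [heq]; simp; positivity
      · have q := aux_int2 b t tb (by linarith) hlt (fun s => ζ s (PK (tb - s) xb)) (A * C * t ^ (ρ / 2)) ?_
        · refine q.trans ?_
          have hd0 : 0 < tb - t := by linarith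
          have e1 : (tb - t) ^ (b + 1) = (√(tb - t)) ^ κ * (tb - t) ^ (θ₁ / 2) := by
            rw [Real.sqrt_eq_rpow, ← Real.rpow_mul hd0.le, ← Real.rpow_add hd0]
            congr 1; rw [hκ, hb]; ring
          have e2 : (√(tb - t)) ^ κ ≤ h ^ κ := Real.rpow_le_rpow (Real.sqrt_nonneg _) hth hκ0.le
          have e3 : (tb - t) ^ (θ₁ / 2) ≤ t ^ (θ₁ / 2) := Real.rpow_le_rpow hd0.le hdt (by linarith)
          have e4 : t ^ ((ρ + θ₁) / 2) = t ^ (ρ / 2) * t ^ (θ₁ / 2) := by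
            rw [← Real.rpow_add ht]; congr 1; ring
          rw [e1, e4]
          calc _ ≤ A * C * t ^ (ρ / 2) * (h ^ κ * t ^ (θ₁ / 2) / (b + 1)) := by gcongr
            _ = _ := by ring
        · intro s hs
          have hs0 : 0 < s := ht.trans_le hs.1
          refine (hbd tb xb htb s ⟨hs0, hs.2⟩).trans ?_
          have e5 : s ^ (ρ / 2) ≤ t ^ (ρ / 2) := Real.rpow_le_rpow_of_nonpos ht hs.1 (by linarith)
          have e6 : 0 ≤ (tb - s) ^ b := Real.rpow_nonneg (by linarith [hs.2]) _
          rw [← mul_assoc]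
          gcongr
    rw [show ρ / 2 + (β - n - κ) / 2 + 1 = (ρ + θ₁) / 2 by rw [hκ]; ring] at p1
    calc _ ≤ _ := abs_add_le _ _
      _ ≤ _ := add_le_add p1 p2
      _ = _ := by ring
  have hTθ : ∀ t, 0 < t → t ≤ T → t ^ ((θ₁ - θ₂) / 2) ≤ T ^ ((θ₁ - θ₂) / 2) := fun t h0 h1 =>
    Real.rpow_le_rpow h0.le h1 (by linarith)
  have hTp : 0 < T ^ ((θ₁ - θ₂) / 2) := by positivity
  constructor
  · intro t x ht
    obtain ⟨h0, h1⟩ := ht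
    have h := (HD1 t h0 _ (A * C) (by positivity) (hbd t x h1)).1
    rw [htp t _ h0 (h1.trans hT1)]
    calc _ ≤ t ^ (-(ρ + θ₂ + κ) / 2) * (A * C * (D1 * t ^ (ρ / 2 + b + 1))) := by gcongr
      _ = A * D1 * C * (t ^ (-(ρ + θ₂ + κ) / 2) * t ^ (ρ / 2 + b + 1)) := by ring
      _ = A * D1 * C * t ^ ((θ₁ - θ₂) / 2) := by
          rw [← Real.rpow_add h0]; congr 2; rw [hκ, hb]; ring
      _ ≤ A * D1 * C * T ^ ((θ₁ - θ₂) / 2) := by gcongr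
      _ ≤ _ := by
          have : 0 ≤ A * (D2 + 1 / (b + 1)) * C * T ^ ((θ₁ - θ₂) / 2) := by positivity
          linarith
  · have fin : ∀ t tb x xb I h : ℝ, 0 < t → t ≤ T → 0 < h → I ≤ A * (D2 + 1 / (b + 1)) * C * (t ^ ((ρ + θ₁) / 2) * h ^ κ) →
        I / (t ^ ((ρ + θ₂) / 2) * h ^ κ) ≤ (A * D1 + A * (D2 + 1 / (b + 1))) * C * T ^ ((θ₁ - θ₂) / 2) := by
      intro t tb x xb I h h0 h1 hh hI
      have hhk : 0 < h ^ κ := by positivity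
      rw [div_le_iff₀ (by positivity)]
      refine hI.trans ?_
      have e : t ^ ((ρ + θ₁) / 2) = t ^ ((ρ + θ₂) / 2) * t ^ ((θ₁ - θ₂) / 2) := by
        rw [← Real.rpow_add h0]; congr 1; ring
      have := hTθ t h0 h1
      rw [e]
      calc _ ≤ A * (D2 + 1 / (b + 1)) * C * (t ^ ((ρ + θ₂) / 2) * T ^ ((θ₁ - θ₂) / 2) * h ^ κ) := by gcongr
        _ ≤ (A * D1 + A * (D2 + 1 / (b + 1))) * C * (t ^ ((ρ + θ₂) / 2) * T ^ ((θ₁ - θ₂) / 2) * h ^ κ) := by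
            gcongr
            have : 0 ≤ A * D1 := by positivity
            linarith
        _ = _ := by ring
    intro t x tb xb ht htb hne hdt
    set h := pnormS (tb, xb) (t, x) with hh
    have hh1 : √|tb - t| ≤ h := le_max_left _ _
    have hh2 : |xb - x| ≤ h := le_max_right _ _
    have hh0 : 0 < h := by
      by_contra hcon
      push Not at hcon
      have h1 : √|tb - t| ≤ 0 := hh1.trans hcon
      have h2 : |xb - x| ≤ 0 := hh2.trans hcon
      rw [Real.sqrt_le_left le_rfl] at h1
      have h3 : tb - t = 0 := abs_eq_zero.1 (le_antisymm (by simpa using h1) (abs_nonneg _))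
      have h4 : xb - x = 0 := abs_eq_zero.1 (le_antisymm h2 (abs_nonneg _))
      exact hne (by rw [sub_eq_zero.1 h3, sub_eq_zero.1 h4])
    have key : ∀ t tb, t ∈ Set.Ioc 0 T → tb ∈ Set.Ioc 0 T → t ≤ tb → tnorm2 t tb = tnorm t := by
      intro t tb ht htb hle
      rw [tnorm2, htn t ht.1 (ht.2.trans hT1), htn tb htb.1 (htb.2.trans hT1), min_eq_left (Real.sqrt_le_sqrt hle)]
    rcases le_total t tb with hle | hle
    · rw [key t tb ht htb hle, htn t ht.1 (ht.2.trans hT1), Real.sq_sqrt ht.1.le, abs_of_nonneg (by linarith)] at hdt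
      rw [abs_of_nonneg (by linarith)] at hh1
      rw [key t tb ht htb hle, htp t _ ht.1 (ht.2.trans hT1)]
      exact fin t tb x xb _ h ht.1 ht.2 hh0 (hincr t tb x xb h ht.1 hle htb.2 hdt hh0 hh1 hh2)
    · have hsym : tnorm2 t tb = tnorm2 tb t := min_comm _ _
      rw [hsym]
      rw [hsym, key tb t htb ht hle, htn tb htb.1 (htb.2.trans hT1), Real.sq_sqrt htb.1.le, abs_sub_comm, abs_of_nonneg (by linarith)] at hdt
      rw [abs_sub_comm, abs_of_nonneg (by linarith)] at hh1
      rw [abs_sub_comm] at hh2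
      rw [key tb t htb ht hle, htp tb _ htb.1 (htb.2.trans hT1), abs_sub_comm]
      exact fin tb t xb x _ h htb.1 htb.2 hh0 (hincr tb t xb x h htb.1 hle ht.2 hdt hh0 hh1 hh2)
end
end

section
/- Let a : ℤ → ℝ be finitely supported with a(−k) = a(k) for all k, Σ_k a(k) = 0, Σ_k k² a(k) = 2, and such that ν̂(θ) := Σ_k a(k) e^{−2πikθ} vanishes only for θ ∈ ℤ; set ν̄ := Σ_k |a(k)|. Let b : ℤ → ℝ be finitely supported with Σ_k b(k) = 0 and Σ_k k b(k) = 1. Let ψ ∈ 𝒮(ℝ) be a Schwartz function whose Fourier transform is supported in {ξ : |ξ| ≤ 3/4}, and for ε = 2^{−N} define P^ε_t(x) := ((Id + ε²Δ_ε)^{⌊t ε^{−2}⌋} ψ^ε)(x) for t ≥ 0 and x ∈ ℝ, and P^ε_t := 0 for t < 0, where ψ^ε(x) := ε^{−1} ψ(x/ε), Δ_ε φ(x) := (2ν̄ε²)^{−1} Σ_k a(k) φ(x+εk) and D_{x,ε} φ(x) := ε^{−1} Σ_k b(k) φ(x+εk). Then for any c > 0 and any j, k, m ∈ ℕ with m <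 ⌊c⌋ ∨ ⌊c^{−1}⌋ there exists a constant C, depending only on j, k and m (and on a, b, ψ, but not on ε), such that for all ε = 2^{−N}: |∂_x^k (D_{x,ε}^j P^ε_t)(x)| ≤ C |t|_ε^{−1−j−k+m} |x|^{−m} for all (t,x) ∈ ℝ² with |t|^{1/2} ∨ |x| ≥ cε, and |∂_x^k (D_{x,ε}^j P^ε_t)(x)| ≤ C |t|_ε^{−1−j−k} for all (t,x) ∈ ℝ² with |t|^{1/2} ∨ |x| < cε, where |t|_ε := |t|^{1/2} ∨ ε. -/
open Real

noncomputable section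

/-- The operator `Id + ε²Δ_ε` acting on functions on `ℝ`, where
`Δ_ε φ(x) = (2ν̄ε²)⁻¹ Σ_k a(k) φ(x+εk)` and `ν̄ = Σ_k |a(k)|`. -/
def stepOpR (a : ℤ →₀ ℝ) (ε : ℝ) (f : ℝ → ℝ) : ℝ → ℝ :=
  fun x => f x + (2 * ∑ k ∈ a.support, |a k|)⁻¹ * ∑ k ∈ a.support, a k * f (x + ε * k)

/-- The discrete derivative `D_{x,ε} φ(x) = ε⁻¹ Σ_k b(k) φ(x+εk)` acting on
functions on `ℝ`. -/
def dDerivR (b : ℤ →₀ ℝ) (ε : ℝ) (f : ℝ → ℝ) : ℝ → ℝ :=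
  fun x => ε⁻¹ * ∑ k ∈ b.support, b k * f (x + ε * k)

/-- The off-grid extension `P^ε_t = (Id + ε²Δ_ε)^{⌊tε⁻²⌋} ψ^ε` of the discrete
heat kernel, with `ψ^ε(x) = ε⁻¹ ψ(x/ε)`, and `P^ε_t = 0` for `t < 0`. -/
def PeKer (a : ℤ →₀ ℝ) (ε : ℝ) (ψ : ℝ → ℝ) (t : ℝ) : ℝ → ℝ :=
  if 0 ≤ t then (stepOpR a ε)^[Nat.floor (t / ε ^ 2)] (fun y => ε⁻¹ * ψ (y / ε))
  else fun _ => 0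

open scoped ContDiff FourierTransform

/-- scale -/
def RR (n : ℕ) : ℝ := Real.sqrt (n + 1)

lemma RR_sq (n : ℕ) : RR n ^ 2 = n + 1 := Real.sq_sqrt (by positivity)

lemma one_le_RR (n : ℕ) : 1 ≤ RR n := by
  unfold RR
  rw [Real.one_le_sqrt]
  have : (0:ℝ) ≤ n := by positivity
  linarith

/-- family of symbols of order r with weight w -/
def SOrd (r : ℕ) (w : ℕ → ℝ → ℝ) (f : ℕ → ℝ → ℂ) : Prop :=
  (∀ n, ContDiff ℝ ∞ (f n)) ∧ ∀ i : ℕ, ∃ C : ℝ, 0 ≤ C ∧ ∀ n ξ, |ξ| ≤ 1 →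
    RR n ^ r * ‖iteratedDeriv i (f n) ξ‖ ≤
      C * (RR n ^ i * (1 + RR n * |ξ|) ^ (i + r) * w n ξ)

lemma SOrd.mul {r s : ℕ} {w : ℕ → ℝ → ℝ} {f g : ℕ → ℝ → ℂ} (hf : SOrd r w f)
    (hg : SOrd s (fun _ _ => 1) g) : SOrd (s + r) w (fun n ξ => g n ξ * f n ξ) := by
  refine ⟨fun n => (hg.1 n).mul (hf.1 n), fun i => ?_⟩
  choose Cf hCf hf2 using hf.2
  choose Cg hCg hg2 using hg.2
  refine ⟨∑ l ∈ Finset.range (i+1), (i.choose l : ℝ) * (Cg l * Cf (i - l)), ?_, ?_⟩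
  · exact Finset.sum_nonneg fun l _ => mul_nonneg (by positivity) (mul_nonneg (hCg _) (hCf _))
  intro n ξ hξ
  have h1 := one_le_RR n
  have hc1 : ContDiffAt ℝ i (g n) ξ := ((hg.1 n).of_le (by exact_mod_cast le_top)).contDiffAt
  have hc2 : ContDiffAt ℝ i (f n) ξ := ((hf.1 n).of_le (by exact_mod_cast le_top)).contDiffAt
  rw [iteratedDeriv_fun_mul hc1 hc2]
  refine (mul_le_mul_of_nonneg_left (norm_sum_le _ _) (by positivity)).trans ?_
  rw [Finset.mul_sum, Finset.sum_mul]
  refine Finset.sum_le_sum fun l hl => ?_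
  have hl' : l ≤ i := by simpa [Nat.lt_succ_iff] using hl
  have e1 := hg2 l n ξ hξ
  have e2 := hf2 (i - l) n ξ hξ
  have e3 := mul_le_mul e1 e2 (by positivity) ((by positivity : (0:ℝ) ≤ _).trans e1)
  have hi : i = l + (i - l) := by omega
  generalize i - l = p at *
  simp only [norm_mul, Complex.norm_natCast]
  calc _ = (i.choose l : ℝ) * (RR n ^ s * ‖iteratedDeriv l (g n) ξ‖ * (RR n ^ r * ‖iteratedDeriv p (f n) ξ‖)) := by ring
    _ ≤ (i.choose l : ℝ) * (Cg l * (RR n ^ l * (1 + RR n * |ξ|) ^ (l + s) * 1) * (Cf p * (RR n ^ p * (1 + RR n * |ξ|) ^ (p + r) * w n ξ))) := by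
      gcongr
    _ = _ := by
      have : RR n ^ i = RR n ^ l * RR n ^ p := by rw [hi, pow_add]
      rw [this, show i + (s + r) = (l + s) + (p + r) by omega, pow_add _ (l+s)]
      ring

lemma bdd_iter {g : ℝ → ℂ} (hg : ContDiff ℝ ∞ g) (i : ℕ) :
    ∃ C : ℝ, 0 ≤ C ∧ ∀ ξ, |ξ| ≤ 1 → ‖iteratedDeriv i g ξ‖ ≤ C := by
  have hcont : Continuous (iteratedDeriv i g) := hg.continuous_iteratedDeriv i (by exact_mod_cast le_top)
  obtain ⟨C, hC⟩ := (isCompact_Icc (a := (-1:ℝ)) (b := 1)).exists_bound_of_continuousOn hcont.continuousOn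
  refine ⟨C, (norm_nonneg _).trans (hC 0 (by simp)), fun ξ hξ => hC ξ (abs_le.1 hξ)⟩

lemma SOrd.fixed {g : ℝ → ℂ} (hg : ContDiff ℝ ∞ g) : SOrd 0 (fun _ _ => 1) (fun _ => g) := by
  refine ⟨fun _ => hg, fun i => ?_⟩
  obtain ⟨C, hC, h⟩ := bdd_iter hg i
  refine ⟨C, hC, fun n ξ hξ => ?_⟩
  have h1 := one_le_RR n
  have : (1:ℝ) ≤ RR n ^ i * (1 + RR n * |ξ|) ^ (i + 0) * 1 := by
    have a1 : (1:ℝ) ≤ RR n ^ i := one_le_pow₀ h1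
    have a2 : (1:ℝ) ≤ (1 + RR n * |ξ|) ^ (i + 0) := one_le_pow₀ (by
      have : 0 ≤ RR n * |ξ| := by positivity
      linarith)
    nlinarith
  have := mul_le_mul_of_nonneg_left this hC
  have := h ξ hξ
  simp only [pow_zero, one_mul] at *
  linarith

lemma SOrd.fixed1 {g : ℝ → ℂ} (hg : ContDiff ℝ ∞ g) (h0 : g 0 = 0) :
    SOrd 1 (fun _ _ => 1) (fun _ => g) := by
  refine ⟨fun _ => hg, fun i => ?_⟩
  obtain ⟨C, hC, h⟩ := bdd_iter hg i
  rcases i with _ | i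
  · obtain ⟨C, hC, h⟩ := bdd_iter hg 1
    refine ⟨C, hC, fun n ξ hξ => ?_⟩
    have h1 := one_le_RR n
    have key : ‖g ξ - g 0‖ ≤ C * ‖ξ - 0‖ := by
      refine Convex.norm_image_sub_le_of_norm_deriv_le (s := Set.Icc (-1:ℝ) 1) (fun x _ => (hg.differentiable (by simp)).differentiableAt) (fun x hx => ?_) (convex_Icc _ _) (by simp) (abs_le.1 hξ)
      have := h x (abs_le.2 hx)
      rwa [iteratedDeriv_one] at this
    rw [h0, sub_zero, sub_zero, Real.norm_eq_abs] at key
    simp only [iteratedDeriv_zero, pow_zero, pow_one, one_mul, mul_one, zero_add]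
    calc _ ≤ RR n * (C * |ξ|) := by gcongr
      _ ≤ _ := by nlinarith
  · refine ⟨C, hC, fun n ξ hξ => ?_⟩
    have h1 := one_le_RR n
    have a1 : (1:ℝ) ≤ RR n ^ i := one_le_pow₀ h1
    have a2 : (1:ℝ) ≤ (1 + RR n * |ξ|) ^ (i + 1 + 1) := one_le_pow₀ (by
      have : 0 ≤ RR n * |ξ| := by positivity
      linarith)
    calc RR n ^ 1 * ‖iteratedDeriv (i+1) g ξ‖ ≤ RR n ^ 1 * C := by gcongr; exact h ξ hξ
      _ = C * (RR n * (1 * 1)) := by ring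
      _ ≤ C * (RR n * (RR n ^ i * (1 + RR n * |ξ|) ^ (i + 1 + 1))) := by gcongr
      _ = _ := by ring

lemma SOrd.mulpow {g : ℝ → ℂ} (hg : ContDiff ℝ ∞ g) (h0 : g 0 = 0) {r : ℕ} {w : ℕ → ℝ → ℝ}
    {f : ℕ → ℝ → ℂ} (hf : SOrd r w f) (k : ℕ) :
    SOrd (k + r) w (fun n ξ => g ξ ^ k * f n ξ) := by
  induction k with
  | zero => simpa using hf
  | succ k ih =>
    have := ih.mul (SOrd.fixed1 hg h0)
    convert! this using 1
    · omega
    · ext n ξ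
      ring

lemma SOrd.pow {M : ℝ → ℂ} (hM : ContDiff ℝ ∞ M) (hne : ∀ ξ, M ξ ≠ 0) (h0 : deriv M 0 = 0) :
    SOrd 0 (fun n ξ => ‖M ξ‖ ^ n) (fun n ξ => M ξ ^ n) := by
  have hd : ContDiff ℝ ∞ (deriv M) := by
    have := (contDiff_infty_iff_deriv ).1 hM
    exact this.2
  set q : ℝ → ℂ := fun ξ => deriv M ξ / M ξ with hq
  have hqs : ContDiff ℝ ∞ q := by
    simp only [hq, div_eq_mul_inv]
    exact hd.mul (hM.inv hne)
  have hq1 := (SOrd.fixed1 hqs (by simp [hq, h0])).2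
  have hder : ∀ n : ℕ, deriv (fun ξ => M ξ ^ n) = fun ξ => (n : ℂ) * (q ξ * M ξ ^ n) := by
    intro n
    ext ξ
    have : HasDerivAt M (deriv M ξ) ξ := ((hM.differentiable (by simp)) ξ).hasDerivAt
    rw [(this.fun_pow n).deriv]
    rcases n with _ | n
    · simp
    · have := hne ξ
      simp only [hq]
      field_simp
      simp
      ring
  refine ⟨fun n => hM.pow n, fun i => ?_⟩
  induction i using Nat.strong_induction_on with
  | _ i ih =>
  rcases i with _ | i
  · exact ⟨1, by simp, fun n ξ _ => by simp⟩
  choose Cq hCq hq2 using hq1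
  choose! Cf hCf hf2 using ih
  refine ⟨∑ l ∈ Finset.range (i+1), (i.choose l : ℝ) * (Cq l * Cf (i - l)), ?_, ?_⟩
  · exact Finset.sum_nonneg fun l _ => mul_nonneg (by positivity) (mul_nonneg (hCq _) (hCf _ (by omega)))
  intro n ξ hξ
  have h1 := one_le_RR n
  have hn : (n:ℝ) ≤ RR n ^ 2 := by rw [RR_sq]; linarith
  have hc1 : ContDiffAt ℝ i q ξ := (hqs.of_le (by exact_mod_cast le_top)).contDiffAt
  have hc2 : ContDiffAt ℝ i (fun ξ => M ξ ^ n) ξ := ((hM.pow n).of_le (by exact_mod_cast le_top)).contDiffAt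
  rw [iteratedDeriv_succ', hder, iteratedDeriv_const_mul_field, iteratedDeriv_fun_mul hc1 hc2, norm_mul]
  simp only [pow_zero, one_mul, Complex.norm_natCast]
  refine (mul_le_mul_of_nonneg_left (norm_sum_le _ _) (by positivity)).trans ?_
  rw [Finset.mul_sum, Finset.sum_mul]
  refine Finset.sum_le_sum fun l hl => ?_
  have hl' : l ≤ i := by simpa [Nat.lt_succ_iff] using hl
  have e1 := hq2 l n ξ hξ
  have e2 := hf2 (i - l) (by omega) n ξ hξ
  have e3 := mul_le_mul e1 e2 (by positivity) ((by positivity : (0:ℝ) ≤ _).trans e1)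
  have hi : i = l + (i - l) := by omega
  generalize i - l = p at *
  simp only [norm_mul, Complex.norm_natCast]
  calc _ ≤ RR n ^ 2 * ((i.choose l : ℝ) * ‖iteratedDeriv l q ξ‖ * ‖iteratedDeriv p (fun ξ => M ξ ^ n) ξ‖) := by gcongr
    _ = RR n * (i.choose l : ℝ) * (RR n ^ 1 * ‖iteratedDeriv l q ξ‖ * (RR n ^ 0 * ‖iteratedDeriv p (fun ξ => M ξ ^ n) ξ‖)) := by ring
    _ ≤ RR n * (i.choose l : ℝ) * (Cq l * (RR n ^ l * (1 + RR n * |ξ|) ^ (l + 1) * 1) * (Cf p * (RR n ^ p * (1 + RR n * |ξ|) ^ (p + 0) * ‖M ξ‖ ^ n))) := by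
      gcongr
    _ = _ := by
      have : RR n ^ (i+1) = RR n ^ l * RR n ^ p * RR n := by rw [hi, pow_add, pow_add, pow_one]
      rw [this, show i + 1 + 0 = (l + 1) + (p + 0) by omega, pow_add _ (l+1)]
      ring

lemma gauss_bound (c : ℝ) (hc : 0 < c) (p : ℕ) : ∃ C : ℝ, 0 ≤ C ∧ ∀ y : ℝ, 0 ≤ y →
    (1 + y) ^ p * Real.exp (-c * y ^ 2) ≤ C * (1 + y ^ 2)⁻¹ := by
  refine ⟨2 ^ p * (((p+1).factorial : ℝ) / c ^ (p+1) * Real.exp c), by positivity, fun y hy => ?_⟩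
  rw [← div_eq_mul_inv, le_div_iff₀ (by positivity)]
  have h1 : 1 + y ≤ 2 * (1 + y ^ 2) := by nlinarith [sq_nonneg (y - 1/2)]
  have h2 := Real.pow_div_factorial_le_exp (c * (1 + y^2)) (by positivity) (p+1)
  rw [div_le_iff₀ (by positivity), mul_pow] at h2
  have h3 : (1 + y^2)^(p+1) * Real.exp (-c * y^2) ≤ ((p+1).factorial : ℝ) / c ^ (p+1) * Real.exp c := by
    rw [div_mul_eq_mul_div, le_div_iff₀ (by positivity)]
    calc _ = (c ^ (p+1) * (1 + y^2)^(p+1)) * Real.exp (-c * y^2) := by ring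
      _ ≤ (Real.exp (c * (1 + y^2)) * (p+1).factorial) * Real.exp (-c * y^2) := by gcongr
      _ = (p+1).factorial * (Real.exp (c * (1 + y^2)) * Real.exp (-c * y^2)) := by ring
      _ = _ := by rw [← Real.exp_add]; ring_nf
  calc (1 + y) ^ p * Real.exp (-c * y ^ 2) * (1 + y^2) ≤ (2 * (1 + y ^ 2))^p * Real.exp (-c * y ^ 2) * (1 + y^2) := by gcongr
    _ = 2 ^ p * ((1 + y^2)^(p+1) * Real.exp (-c * y^2)) := by rw [mul_pow]; ring
    _ ≤ _ := by gcongr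

lemma SOrd.L1 {r : ℕ} {M : ℝ → ℂ} {f : ℕ → ℝ → ℂ} (hf : SOrd r (fun n ξ => ‖M ξ‖ ^ n) f)
    {c : ℝ} (hc : 0 < c) (hM : ∀ ξ, |ξ| ≤ 3/4 → ‖M ξ‖ ≤ Real.exp (-c * ξ ^ 2))
    (hs : ∀ n ξ, 3/4 < |ξ| → f n ξ = 0) (m : ℕ) :
    ∃ C : ℝ, 0 ≤ C ∧ ∀ n : ℕ, RR n ^ (r + 1) * ∫ ξ, ‖iteratedDeriv m (f n) ξ‖ ≤ C * RR n ^ m := by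
  obtain ⟨C, hC, h⟩ := hf.2 m
  obtain ⟨C', hC', h'⟩ := gauss_bound c hc (m + r)
  refine ⟨C * (Real.exp c * C') * π, by positivity, fun n => ?_⟩
  have h1 := one_le_RR n
  have hpt : ∀ ξ, RR n ^ r * ‖iteratedDeriv m (f n) ξ‖ ≤ C * (Real.exp c * C') * RR n ^ m * (1 + (RR n * ξ) ^ 2)⁻¹ := by
    intro ξ
    rcases le_or_gt |ξ| (3/4) with hξ | hξ
    · refine (h n ξ (by linarith)).trans ?_
      have a1 : ‖M ξ‖ ^ n ≤ Real.exp c * Real.exp (-c * (RR n * |ξ|) ^ 2) := by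
        refine (pow_le_pow_left₀ (norm_nonneg _) (hM ξ hξ) n).trans ?_
        rw [← Real.exp_nat_mul, ← Real.exp_add, Real.exp_le_exp, mul_pow, RR_sq, sq_abs]
        have : ξ ^ 2 ≤ 1 := by rw [← sq_abs]; nlinarith [abs_nonneg ξ]
        nlinarith
      have a2 := h' (RR n * |ξ|) (by positivity)
      calc _ ≤ C * (RR n ^ m * (1 + RR n * |ξ|) ^ (m + r) * (Real.exp c * Real.exp (-c * (RR n * |ξ|) ^ 2))) := by gcongr
        _ = C * (RR n ^ m * Real.exp c * ((1 + RR n * |ξ|) ^ (m + r) * Real.exp (-c * (RR n * |ξ|) ^ 2))) := by ring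
        _ ≤ C * (RR n ^ m * Real.exp c * (C' * (1 + (RR n * |ξ|)^2)⁻¹)) := by gcongr
        _ = _ := by rw [mul_pow, sq_abs, mul_pow]; ring
    · have : iteratedDeriv m (f n) ξ = 0 := by
        have : f n =ᶠ[nhds ξ] fun _ => 0 := by
          have : ∀ᶠ y in nhds ξ, 3/4 < |y| := continuous_abs.continuousAt.eventually_const_lt hξ
          filter_upwards [this] with y hy using hs n y hy
        rw [this.iteratedDeriv_eq]
        simp
      rw [this]
      simp only [norm_zero, mul_zero]
      positivity
  have hint : MeasureTheory.Integrable (fun ξ : ℝ => (1 + (RR n * ξ) ^ 2)⁻¹) :=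
    integrable_inv_one_add_sq.comp_mul_left' (by positivity)
  calc _ = RR n * ∫ ξ, RR n ^ r * ‖iteratedDeriv m (f n) ξ‖ := by
        rw [MeasureTheory.integral_const_mul]; ring
    _ ≤ RR n * ∫ ξ, C * (Real.exp c * C') * RR n ^ m * (1 + (RR n * ξ) ^ 2)⁻¹ := by
        refine mul_le_mul_of_nonneg_left ?_ (by positivity)
        refine MeasureTheory.integral_mono_of_nonneg (Filter.Eventually.of_forall fun ξ => by positivity) (hint.const_mul _) (Filter.Eventually.of_forall hpt)
    _ = _ := by
      rw [MeasureTheory.integral_const_mul]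
      have := MeasureTheory.Measure.integral_comp_mul_left (fun x : ℝ => (1 + x^2)⁻¹) (RR n)
      rw [this, integral_univ_inv_one_add_sq, abs_of_pos (by positivity), smul_eq_mul]
      field_simp
/-- Fourier symbol -/
def symb (a : ℤ →₀ ℝ) (ξ : ℝ) : ℂ :=
  ∑ k ∈ a.support, (a k : ℂ) * Complex.exp (-(2 * Real.pi * k * ξ) * Complex.I)

/-- real part of symbol -/
def symbR (a : ℤ →₀ ℝ) (ξ : ℝ) : ℝ :=
  ∑ k ∈ a.support, a k * Real.cos (2 * Real.pi * k * ξ)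

lemma symb_contDiff (a : ℤ →₀ ℝ) : ContDiff ℝ ∞ (symb a) := by
  unfold symb
  refine ContDiff.sum fun k _ => contDiff_const.mul ?_
  have h1 : ContDiff ℝ ∞ (fun ξ : ℝ => (ξ : ℂ)) := Complex.ofRealCLM.contDiff
  exact ((contDiff_const.mul h1).neg.mul contDiff_const).cexp

lemma symbR_cont (a : ℤ →₀ ℝ) : Continuous (symbR a) := by
  unfold symbR
  fun_prop

lemma symb_eq (a : ℤ →₀ ℝ) (ha_symm : ∀ k : ℤ, a (-k) = a k) (ξ : ℝ) :
    symb a ξ = (symbR a ξ : ℂ) := by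
  have hsin : ∑ k ∈ a.support, a k * Real.sin (2 * Real.pi * k * ξ) = 0 := by
    have : ∑ k ∈ a.support, a k * Real.sin (2 * Real.pi * k * ξ) =
        ∑ k ∈ a.support, -(a k * Real.sin (2 * Real.pi * k * ξ)) := by
      refine Finset.sum_nbij' (fun k => -k) (fun k => -k) ?_ ?_ ?_ ?_ ?_
      · intro k hk; simpa [ha_symm] using hk
      · intro k hk; simpa [ha_symm] using hk
      · intro k _; simp
      · intro k _; simp
      · intro k _
        rw [ha_symm]
        push_cast
        rw [show 2 * Real.pi * -(k:ℝ) * ξ = -(2 * Real.pi * k * ξ) by ring, Real.sin_neg]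
        ring
    rw [Finset.sum_neg_distrib] at this
    linarith
  have : symb a ξ = (symbR a ξ : ℂ) - (∑ k ∈ a.support, a k * Real.sin (2 * Real.pi * k * ξ) : ℝ) * Complex.I := by
    unfold symb symbR
    push_cast
    rw [Finset.sum_mul, ← Finset.sum_sub_distrib]
    refine Finset.sum_congr rfl fun k _ => ?_
    rw [Complex.exp_mul_I, Complex.cos_neg, Complex.sin_neg]
    ring
  rw [this, hsin]
  simp

lemma symbR_even (a : ℤ →₀ ℝ) (ξ : ℝ) : symbR a (-ξ) = symbR a ξ := by
  unfold symbR
  refine Finset.sum_congr rfl fun k _ => ?_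
  rw [mul_neg, Real.cos_neg]

lemma symbR_abs (a : ℤ →₀ ℝ) (ξ : ℝ) : |symbR a ξ| ≤ ∑ k ∈ a.support, |a k| := by
  unfold symbR
  refine (Finset.abs_sum_le_sum_abs _ _).trans (Finset.sum_le_sum fun k _ => ?_)
  rw [abs_mul]
  have := Real.abs_cos_le_one (2 * Real.pi * k * ξ)
  nlinarith [abs_nonneg (a k)]

lemma symbR_small (a : ℤ →₀ ℝ) (ha0 : ∑ k ∈ a.support, a k = 0)
    (ha2 : ∑ k ∈ a.support, ((k : ℝ)) ^ 2 * a k = 2) :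
    ∃ δ : ℝ, 0 < δ ∧ ∀ ξ, |ξ| ≤ δ → symbR a ξ ≤ -ξ ^ 2 := by
  set B : ℝ := ∑ k ∈ a.support, |a k| * (2 * Real.pi * |(k:ℝ)|) ^ 4 with hB
  set L : ℝ := ∑ k ∈ a.support, (2 * Real.pi * |(k:ℝ)|) with hL
  have hB0 : 0 ≤ B := Finset.sum_nonneg fun _ _ => by positivity
  have hL0 : 0 ≤ L := Finset.sum_nonneg fun _ _ => by positivity
  refine ⟨1 / (1 + L + B), by positivity, fun ξ hξ => ?_⟩
  rw [le_div_iff₀ (by positivity)] at hξ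
  have hp : ∀ k ∈ a.support, |2 * Real.pi * k * ξ| = 2 * Real.pi * |(k:ℝ)| * |ξ| := by
    intro k _
    rw [abs_mul, abs_mul, abs_of_pos Real.two_pi_pos]
  have hterm : ∀ k ∈ a.support, a k * Real.cos (2 * Real.pi * k * ξ) ≤
      a k - 2 * Real.pi ^ 2 * ξ ^ 2 * ((k:ℝ) ^ 2 * a k) + |a k| * (2 * Real.pi * |(k:ℝ)|) ^ 4 * ξ ^ 4 := by
    intro k hk
    have hle : 2 * Real.pi * |(k:ℝ)| ≤ L :=
      Finset.single_le_sum (f := fun k : ℤ => 2 * Real.pi * |(k:ℝ)|) (fun _ _ => by positivity) hk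
    have h1 : |2 * Real.pi * k * ξ| ≤ 1 := by
      rw [hp k hk]
      nlinarith [abs_nonneg ξ]
    have h2 := Real.cos_bound h1
    rw [hp k hk] at h2
    have h3 : a k * (Real.cos (2 * Real.pi * k * ξ) - (1 - (2 * Real.pi * k * ξ) ^ 2 / 2)) ≤
        |a k| * ((2 * Real.pi * |(k:ℝ)| * |ξ|) ^ 4 * (5 / 96)) := by
      refine (le_abs_self _).trans ?_
      rw [abs_mul]
      gcongr
    have h4 : |ξ| ^ 4 = ξ ^ 4 := by
      rw [show (4:ℕ) = 2 * 2 by norm_num, pow_mul, pow_mul, sq_abs]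
    rw [mul_pow (2 * Real.pi * |(k:ℝ)|) |ξ| 4, h4] at h3
    have h5 : 0 ≤ |a k| * (2 * Real.pi * |(k:ℝ)|) ^ 4 * ξ ^ 4 := by positivity
    nlinarith
  have hsum : symbR a ξ ≤ -(4 * Real.pi ^ 2 * ξ ^ 2) + B * ξ ^ 4 := by
    refine (Finset.sum_le_sum hterm).trans (le_of_eq ?_)
    rw [Finset.sum_add_distrib, Finset.sum_sub_distrib, ← Finset.mul_sum, ← Finset.sum_mul, ha0, ha2]
    ring
  have hpi := Real.pi_gt_three
  have h1 : |ξ| ≤ 1 := by nlinarith [abs_nonneg ξ]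
  have h2 : B * ξ ^ 2 ≤ 1 := by
    rw [← sq_abs]
    nlinarith [abs_nonneg ξ]
  have h3 : B * ξ ^ 4 ≤ ξ ^ 2 := by nlinarith [sq_nonneg ξ]
  have h5 : 2 * ξ ^ 2 ≤ 4 * Real.pi ^ 2 * ξ ^ 2 :=
    mul_le_mul_of_nonneg_right (by nlinarith) (sq_nonneg ξ)
  linarith

lemma symbR_bound (a : ℤ →₀ ℝ)
    (ha_symm : ∀ k : ℤ, a (-k) = a k)
    (ha0 : ∑ k ∈ a.support, a k = 0)
    (ha2 : ∑ k ∈ a.support, ((k : ℝ)) ^ 2 * a k = 2)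
    (ha_four : ∀ θ : ℝ, symb a θ = 0 → ∃ z : ℤ, θ = (z : ℝ)) :
    ∃ c : ℝ, 0 < c ∧ ∀ ξ, |ξ| ≤ 3 / 4 → symbR a ξ ≤ -c * ξ ^ 2 := by
  obtain ⟨δ, hδ, hsm⟩ := symbR_small a ha0 ha2
  have hneg : ∀ ξ, 0 < ξ → ξ < 1 → symbR a ξ < 0 := by
    intro ξ h0 h1
    by_contra! hcon
    set η := min δ ξ with hη
    have hη0 : 0 < η := lt_min hδ h0
    have h2 : symbR a η ≤ 0 := by
      have := hsm η (by rw [abs_of_pos hη0]; exact min_le_left _ _)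
      nlinarith
    obtain ⟨y, hy, hy0⟩ := intermediate_value_Icc (min_le_right δ ξ) (symbR_cont a).continuousOn ⟨h2, hcon⟩
    obtain ⟨z, hz⟩ := ha_four y (by rw [symb_eq a ha_symm, hy0]; simp)
    have hy1 : 0 < y := hη0.trans_le hy.1
    have hy2 : y < 1 := hy.2.trans_lt h1
    rw [hz] at hy1 hy2
    norm_cast at hy1 hy2
    omega
  have hpos : ∃ c : ℝ, 0 < c ∧ ∀ ξ, 0 ≤ ξ → ξ ≤ 3 / 4 → symbR a ξ ≤ -c * ξ ^ 2 := by
    rcases le_or_gt (3/4) δ with hd | hd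
    · exact ⟨1, one_pos, fun ξ h0 h1 => by
        have := hsm ξ (by rw [abs_of_nonneg h0]; linarith)
        linarith⟩
    obtain ⟨x, hx, hmax⟩ := (isCompact_Icc (a := δ) (b := 3/4)).exists_isMaxOn ⟨δ, le_refl _, hd.le⟩ (symbR_cont a).continuousOn
    have hx0 := hneg x (hδ.trans_le hx.1) (by linarith [hx.2])
    refine ⟨min 1 (-symbR a x), lt_min one_pos (by linarith), fun ξ h0 h1 => ?_⟩
    rcases le_or_gt ξ δ with h | h
    · have := hsm ξ (by rw [abs_of_nonneg h0]; exact h)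
      have := min_le_left 1 (-symbR a x)
      nlinarith [sq_nonneg ξ]
    · have h2 : symbR a ξ ≤ symbR a x := hmax ⟨h.le, h1⟩
      have := min_le_right 1 (-symbR a x)
      have h4 : ξ ^ 2 ≤ 1 := by nlinarith
      have h5 : min 1 (-symbR a x) * ξ ^ 2 ≤ -symbR a x * 1 := mul_le_mul this h4 (sq_nonneg _) (by linarith)
      linarith
  obtain ⟨c, hc, h⟩ := hpos
  refine ⟨c, hc, fun ξ hξ => ?_⟩
  have := h |ξ| (abs_nonneg _) hξ
  rw [sq_abs] at this
  rcases abs_choice ξ with h | h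
  · rwa [h] at this
  · rwa [h, symbR_even] at this

/-- step symbol -/
def stepS (a : ℤ →₀ ℝ) (ξ : ℝ) : ℂ :=
  1 + ((2 * ∑ k ∈ a.support, |a k| : ℝ) : ℂ)⁻¹ * symb a ξ

lemma stepS_props (a : ℤ →₀ ℝ)
    (ha_symm : ∀ k : ℤ, a (-k) = a k)
    (ha0 : ∑ k ∈ a.support, a k = 0)
    (ha2 : ∑ k ∈ a.support, ((k : ℝ)) ^ 2 * a k = 2)
    (ha_four : ∀ θ : ℝ, symb a θ = 0 → ∃ z : ℤ, θ = (z : ℝ)) :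
    ContDiff ℝ ∞ (stepS a) ∧ (∀ ξ, stepS a ξ ≠ 0) ∧ deriv (stepS a) 0 = 0 ∧
    ∃ c : ℝ, 0 < c ∧ ∀ ξ, |ξ| ≤ 3 / 4 → ‖stepS a ξ‖ ≤ Real.exp (-c * ξ ^ 2) := by
  set V := ∑ k ∈ a.support, |a k| with hV
  have hV0 : 0 < V := by
    have h0 : 0 ≤ V := Finset.sum_nonneg fun _ _ => abs_nonneg _
    rcases h0.lt_or_eq with h | h
    · exact h
    exfalso
    have := (Finset.sum_eq_zero_iff_of_nonneg (fun k _ => abs_nonneg (a k))).1 h.symm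
    rw [Finset.sum_eq_zero (fun k hk => by rw [abs_eq_zero.1 (this k hk), mul_zero])] at ha2
    norm_num at ha2
  have heq : ∀ ξ, stepS a ξ = ((1 + symbR a ξ / (2 * V) : ℝ) : ℂ) := by
    intro ξ
    unfold stepS
    rw [symb_eq a ha_symm, ← hV]
    push_cast
    ring
  have hlow : ∀ ξ, 1 / 2 ≤ 1 + symbR a ξ / (2 * V) := by
    intro ξ
    have h1 := (abs_le.1 (symbR_abs a ξ)).1
    have : -(1/2) ≤ symbR a ξ / (2 * V) := by
      rw [le_div_iff₀ (by positivity)]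
      linarith
    linarith
  refine ⟨contDiff_const.add (contDiff_const.mul (symb_contDiff a)), ?_, ?_, ?_⟩
  · intro ξ h
    rw [heq] at h
    have := Complex.ofReal_eq_zero.1 h
    linarith [hlow ξ]
  · have hev : (fun ξ => stepS a (-ξ)) = stepS a := by
      ext ξ
      rw [heq, heq, symbR_even]
    have := deriv_comp_neg (stepS a) 0
    rw [hev, neg_zero] at this
    have h2 : (2:ℂ) * deriv (stepS a) 0 = 0 := by linear_combination this
    simpa using h2
  · obtain ⟨c, hc, h⟩ := symbR_bound a ha_symm ha0 ha2 ha_four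
    refine ⟨c / (2 * V), by positivity, fun ξ hξ => ?_⟩
    rw [heq, Complex.norm_real, Real.norm_eq_abs, abs_of_nonneg (by linarith [hlow ξ])]
    have h1 := Real.add_one_le_exp (-(c / (2 * V)) * ξ ^ 2)
    have h2 : symbR a ξ / (2 * V) ≤ (-c * ξ ^ 2) / (2 * V) := by
      gcongr
      exact h ξ hξ
    have h3 : (-c * ξ ^ 2) / (2 * V) = -(c / (2 * V)) * ξ ^ 2 := by ring
    linarith
/-- complexification of a real Schwartz function -/
def cplx (ψ : SchwartzMap ℝ ℝ) : SchwartzMap ℝ ℂ where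
  toFun x := (ψ x : ℂ)
  smooth' := Complex.ofRealCLM.contDiff.comp (ψ.smooth ⊤)
  decay' k n := by
    obtain ⟨C, hC⟩ := ψ.decay' k n
    refine ⟨C, fun x => ?_⟩
    have := Complex.ofRealLI.norm_iteratedFDeriv_comp_left (f := ψ) (x := x) (ψ.smooth n).contDiffAt le_rfl
    have h2 : (fun x => (ψ x : ℂ)) = Complex.ofRealLI ∘ ψ := rfl
    rw [h2, this]
    exact hC x

lemma exists_G (ψ : SchwartzMap ℝ ℝ)
    (hψFT : ∀ ξ : ℝ, 3 / 4 < |ξ| →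
      (∫ x : ℝ, Complex.exp (-(2 * Real.pi * ξ * x) * Complex.I) * (ψ x : ℂ)) = 0) :
    ∃ G : ℝ → ℂ, ContDiff ℝ ∞ G ∧ (∀ ξ, 3 / 4 < |ξ| → G ξ = 0) ∧ ∀ x, (ψ x : ℂ) = 𝓕 G x := by
  refine ⟨⇑(𝓕⁻ (cplx ψ) : SchwartzMap ℝ ℂ), (𝓕⁻ (cplx ψ)).smooth ⊤, ?_, ?_⟩
  · intro ξ hξ
    rw [SchwartzMap.fourierInv_coe, Real.fourierInv_eq_fourier_neg, Real.fourier_real_eq_integral_exp_smul]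
    rw [← hψFT (-ξ) (by rwa [abs_neg])]
    congr 1
    ext v
    rw [smul_eq_mul]
    congr 2
    push_cast
    ring
  · intro x
    rw [← SchwartzMap.fourier_coe, FourierTransform.fourier_fourierInv_eq]
    rfl

lemma compSupp {G : ℝ → ℂ} (hs : ∀ ξ, 3 / 4 < |ξ| → G ξ = 0) : HasCompactSupport G := by
  refine HasCompactSupport.intro (isCompact_Icc (a := -(3/4:ℝ)) (b := 3/4)) fun x hx => hs x ?_
  by_contra! h
  exact hx (abs_le.1 h)

lemma fourier_symb (b : ℤ →₀ ℝ) {H : ℝ → ℂ} (hc : Continuous H) (hs : HasCompactSupport H)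
    {F : ℝ → ℝ} (hF : ∀ x, (F x : ℂ) = 𝓕 H x) (x : ℝ) :
    ((∑ k ∈ b.support, b k * F (x + 1 * k) : ℝ) : ℂ) = 𝓕 (fun ξ => symb b ξ * H ξ) x := by
  push_cast
  simp_rw [hF, Real.fourier_real_eq_integral_exp_smul, smul_eq_mul]
  simp_rw [← MeasureTheory.integral_const_mul]
  rw [← MeasureTheory.integral_finsetSum]
  · congr 1
    ext ξ
    unfold symb
    rw [Finset.sum_mul, Finset.mul_sum]
    refine Finset.sum_congr rfl fun k _ => ?_
    have : Complex.exp (↑(-2 * π * ξ * (x + 1 * (k:ℝ))) * Complex.I) =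
      Complex.exp (↑(-2 * π * ξ * x) * Complex.I) * Complex.exp (-(2 * ↑π * ↑k * ↑ξ) * Complex.I) := by
      rw [← Complex.exp_add]
      congr 1
      push_cast
      ring
    rw [this]
    ring
  · intro k _
    refine Continuous.integrable_of_hasCompactSupport (by fun_prop) ?_
    exact (hs.mul_left).mul_left

lemma fourier_step (a : ℤ →₀ ℝ) {H : ℝ → ℂ} (hc : Continuous H) (hs : HasCompactSupport H)
    {F : ℝ → ℝ} (hF : ∀ x, (F x : ℂ) = 𝓕 H x) (x : ℝ) :
    (stepOpR a 1 F x : ℂ) = 𝓕 (fun ξ => stepS a ξ * H ξ) x := by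
  have hS := (symb_contDiff a).continuous
  have h1 := fourier_symb a hc hs hF x
  unfold stepOpR
  rw [Complex.ofReal_add, Complex.ofReal_mul, h1, hF]
  simp_rw [Real.fourier_real_eq_integral_exp_smul, smul_eq_mul]
  rw [← MeasureTheory.integral_const_mul, ← MeasureTheory.integral_add]
  · congr 1
    ext ξ
    unfold stepS
    push_cast
    ring
  · exact Continuous.integrable_of_hasCompactSupport (by fun_prop) hs.mul_left
  · exact Continuous.integrable_of_hasCompactSupport (by fun_prop) hs.mul_left.mul_left.mul_left

lemma fourier_step_iter (a : ℤ →₀ ℝ) {H : ℝ → ℂ} (hc : Continuous H) (hs : HasCompactSupport H)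
    {F : ℝ → ℝ} (hF : ∀ x, (F x : ℂ) = 𝓕 H x) (n : ℕ) (x : ℝ) :
    (((stepOpR a 1)^[n] F) x : ℂ) = 𝓕 (fun ξ => stepS a ξ ^ n * H ξ) x := by
  have hS : Continuous (stepS a) := by
    have := (symb_contDiff a).continuous
    unfold stepS
    fun_prop
  induction n generalizing x with
  | zero => simpa using hF x
  | succ n ih =>
    rw [Function.iterate_succ_apply']
    rw [fourier_step a (H := fun ξ => stepS a ξ ^ n * H ξ) (by fun_prop) hs.mul_left ih]
    refine congrArg (fun f : ℝ → ℂ => 𝓕 f x) ?_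
    ext ξ
    ring

lemma fourier_d_iter (b : ℤ →₀ ℝ) {H : ℝ → ℂ} (hc : Continuous H) (hs : HasCompactSupport H)
    {F : ℝ → ℝ} (hF : ∀ x, (F x : ℂ) = 𝓕 H x) (n : ℕ) (x : ℝ) :
    (((dDerivR b 1)^[n] F) x : ℂ) = 𝓕 (fun ξ => symb b ξ ^ n * H ξ) x := by
  have hS := (symb_contDiff b).continuous
  induction n generalizing x with
  | zero => simpa using hF x
  | succ n ih =>
    rw [Function.iterate_succ_apply']
    have := fourier_symb b (H := fun ξ => symb b ξ ^ n * H ξ) (by fun_prop) hs.mul_left ih x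
    have e : ∀ f : ℝ → ℝ, dDerivR b 1 f x = ∑ k ∈ b.support, b k * f (x + 1 * k) := by
      intro f
      simp only [dDerivR, inv_one, one_mul]
    rw [e, this]
    refine congrArg (fun f : ℝ → ℂ => 𝓕 f x) ?_
    ext ξ
    ring

lemma fourier_bound {H : ℝ → ℂ} (hc : ContDiff ℝ ∞ H) (hs : HasCompactSupport H)
    {F : ℝ → ℝ} (hF : ∀ x, (F x : ℂ) = 𝓕 H x) :
    ContDiff ℝ ∞ F ∧ ∀ (k m : ℕ) (x : ℝ), |x| ^ m * |iteratedDeriv k F x| ≤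
      ∫ ξ, ‖iteratedDeriv m (fun ξ : ℝ => (-2 * π * Complex.I * ξ) ^ k * H ξ) ξ‖ := by
  have hint : ∀ n : ℕ, MeasureTheory.Integrable (fun x : ℝ ↦ x ^ n • H x) := by
    intro n
    have := hc.continuous
    refine Continuous.integrable_of_hasCompactSupport (by fun_prop) (hs.mono ?_)
    intro y hy h0
    exact hy (by simp only [h0, smul_zero])
  have hFc : Complex.ofRealLI ∘ F = 𝓕 H := by
    ext x
    exact hF x
  have hFH : ContDiff ℝ ∞ (𝓕 H) := by
    refine Real.contDiff_fourier (N := ⊤) fun n _ => ?_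
    convert (hint n).norm using 2 with x
    simp
  have hFs : ContDiff ℝ ∞ F := by
    have : F = Complex.reCLM ∘ 𝓕 H := by
      ext x
      simp [← hF x]
    rw [this]
    exact Complex.reCLM.contDiff.comp hFH
  refine ⟨hFs, fun k m x => ?_⟩
  have h1 : |iteratedDeriv k F x| = ‖iteratedDeriv k (𝓕 H) x‖ := by
    rw [← Real.norm_eq_abs, ← norm_iteratedFDeriv_eq_norm_iteratedDeriv,
      ← norm_iteratedFDeriv_eq_norm_iteratedDeriv, ← hFc]
    exact (Complex.ofRealLI.norm_iteratedFDeriv_comp_left (n := k) (hFs.of_le (by exact_mod_cast le_top)).contDiffAt le_rfl).symm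
  rw [h1, Real.iteratedDeriv_fourier (N := ⊤) (fun n _ => hint n) (by exact_mod_cast le_top)]
  simp only [smul_eq_mul]
  set K : ℝ → ℂ := fun ξ : ℝ => (-2 * π * Complex.I * ξ) ^ k * H ξ with hK
  have hof : ContDiff ℝ ∞ (fun ξ : ℝ => (ξ : ℂ)) := Complex.ofRealCLM.contDiff
  have hKc : ContDiff ℝ ∞ K := ((contDiff_const.mul hof).pow k).mul hc
  have hKs : HasCompactSupport K := hs.mul_left
  have hKi : ∀ n : ℕ, MeasureTheory.Integrable (iteratedDeriv n K) := by
    intro n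
    refine Continuous.integrable_of_hasCompactSupport (hKc.continuous_iteratedDeriv n (by exact_mod_cast le_top)) ?_
    refine (hKs.iteratedFDeriv (𝕜 := ℝ) n).mono ?_
    intro y hy
    rw [Function.mem_support] at hy ⊢
    rw [← norm_ne_zero_iff] at hy ⊢
    rwa [norm_iteratedFDeriv_eq_norm_iteratedDeriv]
  have h2 := congrFun (Real.fourier_iteratedDeriv (N := ⊤) (n := m) (f := K) hKc (fun n _ => hKi n) (by exact_mod_cast le_top)) x
  have h3 : ‖𝓕 (iteratedDeriv m K) x‖ ≤ ∫ ξ, ‖iteratedDeriv m K ξ‖ :=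
    VectorFourier.norm_fourierIntegral_le_integral_norm _ _ _ _ _
  refine le_trans ?_ h3
  rw [h2, norm_smul, norm_pow]
  gcongr
  simp only [norm_mul, Complex.norm_I, Complex.norm_real, Real.norm_eq_abs, abs_of_pos Real.pi_pos]
  norm_num
  nlinarith [Real.pi_gt_three, abs_nonneg x]

lemma core (a : ℤ →₀ ℝ)
    (ha_symm : ∀ k : ℤ, a (-k) = a k)
    (ha0 : ∑ k ∈ a.support, a k = 0)
    (ha2 : ∑ k ∈ a.support, ((k : ℝ)) ^ 2 * a k = 2)
    (ha_four : ∀ θ : ℝ, symb a θ = 0 → ∃ z : ℤ, θ = (z : ℝ))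
    (b : ℤ →₀ ℝ)
    (hb0 : ∑ k ∈ b.support, b k = 0)
    (ψ : SchwartzMap ℝ ℝ)
    (hψFT : ∀ ξ : ℝ, 3 / 4 < |ξ| →
      (∫ x : ℝ, Complex.exp (-(2 * Real.pi * ξ * x) * Complex.I) * (ψ x : ℂ)) = 0)
    (j k m : ℕ) :
    ∃ C : ℝ, 0 ≤ C ∧ ∀ n : ℕ,
      ContDiff ℝ ∞ ((dDerivR b 1)^[j] ((stepOpR a 1)^[n] (fun y => ψ y))) ∧
      ∀ x : ℝ, RR n ^ (1 + j + k) * (|x| ^ m *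
      |iteratedDeriv k ((dDerivR b 1)^[j] ((stepOpR a 1)^[n] (fun y => ψ y))) x|) ≤ C * RR n ^ m := by
  obtain ⟨G, hG, hGs, hψ⟩ := exists_G ψ hψFT
  obtain ⟨hMc, hM0, hMd, c, hc, hMb⟩ := stepS_props a ha_symm ha0 ha2 ha_four
  have hof : ContDiff ℝ ∞ (fun ξ : ℝ => (ξ : ℂ)) := Complex.ofRealCLM.contDiff
  have hB := symb_contDiff b
  have hb00 : symb b 0 = 0 := by
    simp only [symb, Complex.ofReal_zero, mul_zero, neg_zero, zero_mul, Complex.exp_zero, mul_one]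
    exact_mod_cast hb0
  have o1 := (SOrd.pow hMc hM0 hMd).mul (SOrd.fixed hG)
  have o2 := SOrd.mulpow hB hb00 o1 j
  have o3 := SOrd.mulpow (g := fun ξ : ℝ => -2 * π * Complex.I * ξ) (contDiff_const.mul hof) (by simp) o2 k
  obtain ⟨C, hC, h⟩ := o3.L1 hc hMb (fun n ξ hξ => by simp [hGs ξ hξ]) m
  refine ⟨C, hC, fun n => ?_⟩
  have f1 := fourier_step_iter a hG.continuous (compSupp hGs) hψ n
  have hcont : Continuous (fun ξ => stepS a ξ ^ n * G ξ) := ((hMc.pow n).mul hG).continuous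
  have f2 := fourier_d_iter b hcont (compSupp hGs).mul_left f1 j
  have hH : ContDiff ℝ ∞ (fun ξ => symb b ξ ^ j * (stepS a ξ ^ n * G ξ)) := (hB.pow j).mul ((hMc.pow n).mul hG)
  obtain ⟨g1, g2⟩ := fourier_bound hH (compSupp hGs).mul_left.mul_left f2
  refine ⟨g1, fun x => ?_⟩
  have h1 := one_le_RR n
  refine le_trans (mul_le_mul_of_nonneg_left (g2 k m x) (by positivity)) ?_
  have := h n
  rw [show k + (j + (0 + 0)) + 1 = 1 + j + k by omega] at this
  refine le_trans (le_of_eq ?_) this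
  congr 3
  ext ξ
  congr 2
  ext ξ
  ring
lemma step_scale (a : ℤ →₀ ℝ) {ε : ℝ} (hε : 0 < ε) (d : ℝ) (f : ℝ → ℝ) (n : ℕ) :
    (stepOpR a ε)^[n] (fun y => d * f (y / ε)) = fun y => d * (stepOpR a 1)^[n] f (y / ε) := by
  induction n with
  | zero => rfl
  | succ n ih =>
    rw [Function.iterate_succ_apply', ih, Function.iterate_succ_apply']
    generalize (stepOpR a 1)^[n] f = g
    ext y
    simp only [stepOpR]
    have hsum : ∑ k ∈ a.support, a k * (d * g ((y + ε * k) / ε)) =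
        d * ∑ k ∈ a.support, a k * g (y / ε + 1 * k) := by
      rw [Finset.mul_sum]
      refine Finset.sum_congr rfl fun k _ => ?_
      rw [show (y + ε * k) / ε = y / ε + 1 * k by field_simp]
      ring
    rw [hsum]
    ring

lemma d_scale (b : ℤ →₀ ℝ) {ε : ℝ} (hε : 0 < ε) (d : ℝ) (f : ℝ → ℝ) (n : ℕ) :
    (dDerivR b ε)^[n] (fun y => d * f (y / ε)) =
      fun y => (d * ε⁻¹ ^ n) * (dDerivR b 1)^[n] f (y / ε) := by
  induction n with
  | zero => simp
  | succ n ih =>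
    rw [Function.iterate_succ_apply', ih, Function.iterate_succ_apply']
    generalize (dDerivR b 1)^[n] f = g
    ext y
    simp only [dDerivR]
    rw [Finset.mul_sum, Finset.mul_sum, Finset.mul_sum]
    refine Finset.sum_congr rfl fun k _ => ?_
    rw [show (y + ε * k) / ε = y / ε + 1 * k by field_simp]
    ring

lemma unified (a : ℤ →₀ ℝ)
    (ha_symm : ∀ k : ℤ, a (-k) = a k)
    (ha0 : ∑ k ∈ a.support, a k = 0)
    (ha2 : ∑ k ∈ a.support, ((k : ℝ)) ^ 2 * a k = 2)
    (ha_four : ∀ θ : ℝ, symb a θ = 0 → ∃ z : ℤ, θ = (z : ℝ))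
    (b : ℤ →₀ ℝ)
    (hb0 : ∑ k ∈ b.support, b k = 0)
    (ψ : SchwartzMap ℝ ℝ)
    (hψFT : ∀ ξ : ℝ, 3 / 4 < |ξ| →
      (∫ x : ℝ, Complex.exp (-(2 * Real.pi * ξ * x) * Complex.I) * (ψ x : ℂ)) = 0)
    (j k m : ℕ) :
    ∃ C : ℝ, 0 ≤ C ∧ ∀ ε : ℝ, 0 < ε → ∀ t x : ℝ,
      |x| ^ m * |iteratedDeriv k ((dDerivR b ε)^[j] (PeKer a ε (fun y => ψ y) t)) x| ≤
        C * (max (Real.sqrt |t|) ε) ^ (-1 - (j : ℝ) - (k : ℝ) + (m : ℝ)) := by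
  obtain ⟨C, hC, h⟩ := core a ha_symm ha0 ha2 ha_four b hb0 ψ hψFT j k m
  refine ⟨C * 2 ^ m, by positivity, fun ε hε t x => ?_⟩
  set T := max (Real.sqrt |t|) ε with hT
  have hT0 : 0 < T := lt_max_of_lt_right hε
  rcases lt_or_ge t 0 with ht | ht
  · have e0 : PeKer a ε (fun y => ψ y) t = fun y => 0 * (fun _ => (0:ℝ)) (y / ε) := by
      simp [PeKer, not_le.2 ht]
    rw [e0, d_scale b hε 0 (fun _ => (0:ℝ))]
    simp only [zero_mul]
    have : iteratedDeriv k (fun _ : ℝ => (0:ℝ)) x = 0 := by simp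
    rw [this, abs_zero, mul_zero]
    positivity
  set n := Nat.floor (t / ε ^ 2) with hn
  obtain ⟨hs, hb⟩ := h n
  set F := (dDerivR b 1)^[j] ((stepOpR a 1)^[n] (fun y => ψ y)) with hF
  have e1 : (dDerivR b ε)^[j] (PeKer a ε (fun y => ψ y) t) = fun y => (ε⁻¹ * ε⁻¹ ^ j) * F (ε⁻¹ * y) := by
    rw [PeKer, if_pos ht, ← hn, step_scale a hε ε⁻¹ (fun y => ψ y), d_scale b hε]
    ext y
    rw [div_eq_inv_mul]
  have e2 : iteratedDeriv k ((dDerivR b ε)^[j] (PeKer a ε (fun y => ψ y) t)) x =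
      (ε⁻¹ * ε⁻¹ ^ j) * (ε⁻¹ ^ k * iteratedDeriv k F (ε⁻¹ * x)) := by
    rw [e1, iteratedDeriv_const_mul_field,
      iteratedDeriv_comp_const_mul (hs.of_le (by exact_mod_cast le_top))]
  have hR := one_le_RR n
  have hs0 : 0 ≤ t / ε ^ 2 := by positivity
  have l1 : t ≤ ε ^ 2 * (n + 1) := by
    have := (Nat.lt_floor_add_one (t / ε ^ 2)).le
    rw [div_le_iff₀ (by positivity)] at this
    linarith
  have l2 : ε ^ 2 * n ≤ t := by
    have := Nat.floor_le hs0
    rw [le_div_iff₀ (by positivity)] at this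
    linarith
  have hsq : (ε * RR n) ^ 2 = ε ^ 2 * (n + 1) := by rw [mul_pow, RR_sq]
  have b1 : T ≤ ε * RR n := by
    refine max_le ?_ (by nlinarith)
    rw [abs_of_nonneg ht]
    refine Real.sqrt_le_iff.2 ⟨by positivity, ?_⟩
    rw [hsq]
    exact l1
  have b2 : ε * RR n ≤ 2 * T := by
    refine abs_le_of_sq_le_sq' ?_ (by positivity) |>.2
    rw [hsq]
    have c1 : t ≤ T ^ 2 := by
      have : Real.sqrt |t| ≤ T := le_max_left _ _
      have h2 := pow_le_pow_left₀ (Real.sqrt_nonneg _) this 2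
      rwa [Real.sq_sqrt (abs_nonneg _), abs_of_nonneg ht] at h2
    have c2 : ε ^ 2 ≤ T ^ 2 := pow_le_pow_left₀ hε.le (le_max_right _ _) 2
    nlinarith
  set X := |x| ^ m * |iteratedDeriv k ((dDerivR b ε)^[j] (PeKer a ε (fun y => ψ y) t)) x| with hX
  have hX0 : 0 ≤ X := by positivity
  have key : (ε * RR n) ^ (1 + j + k) * X ≤ C * (ε * RR n) ^ m := by
    have := mul_le_mul_of_nonneg_left (hb (ε⁻¹ * x)) (by positivity : 0 ≤ ε ^ m)
    have e3 : (ε * RR n) ^ (1 + j + k) * X = ε ^ m * (RR n ^ (1 + j + k) * (|ε⁻¹ * x| ^ m * |iteratedDeriv k F (ε⁻¹ * x)|)) := by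
      rw [hX, e2]
      simp only [abs_mul, abs_pow, abs_inv, abs_of_pos hε, mul_pow, pow_add, inv_pow, pow_one]
      field_simp
    rw [e3]
    refine this.trans (le_of_eq ?_)
    ring
  have fin : T ^ (1 + j + k) * X ≤ C * 2 ^ m * T ^ m := by
    calc T ^ (1 + j + k) * X ≤ (ε * RR n) ^ (1 + j + k) * X := by gcongr
      _ ≤ C * (ε * RR n) ^ m := key
      _ ≤ C * (2 * T) ^ m := by gcongr
      _ = _ := by ring
  have er : T ^ (-1 - (j : ℝ) - (k : ℝ) + (m : ℝ)) = T ^ m / T ^ (1 + j + k) := by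
    rw [← Real.rpow_natCast, ← Real.rpow_natCast, ← Real.rpow_sub hT0]
    congr 1
    push_cast
    ring
  rw [er, ← mul_div_assoc, le_div_iff₀ (by positivity)]
  linarith

/-- uniform-in-`ε` pointwise bounds, with polynomial decay, for
spatial derivatives of discrete derivatives of the extended discrete heat
kernel. At `x = 0` the first bound is stated in the equivalent multiplicative
form `|x|^m · |∂_x^k D_{x,ε}^j P^ε_t(x)| ≤ C |t|_ε^{-1-j-k+m}`. -/
theorem statement5 (a : ℤ →₀ ℝ)
    (ha_symm : ∀ k : ℤ, a (-k) = a k)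
    (ha0 : ∑ k ∈ a.support, a k = 0)
    (ha2 : ∑ k ∈ a.support, ((k : ℝ)) ^ 2 * a k = 2)
    (ha_four : ∀ θ : ℝ,
      (∑ k ∈ a.support, (a k : ℂ) * Complex.exp (-(2 * Real.pi * k * θ) * Complex.I)) = 0 →
      ∃ z : ℤ, θ = (z : ℝ))
    (b : ℤ →₀ ℝ)
    (hb0 : ∑ k ∈ b.support, b k = 0)
    (hb1 : ∑ k ∈ b.support, (k : ℝ) * b k = 1)
    (ψ : SchwartzMap ℝ ℝ)
    (hψFT : ∀ ξ : ℝ, 3 / 4 < |ξ| →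
      (∫ x : ℝ, Complex.exp (-(2 * Real.pi * ξ * x) * Complex.I) * (ψ x : ℂ)) = 0)
    (c : ℝ) (hc : 0 < c) (j k m : ℕ)
    (hm : m < max (Nat.floor c) (Nat.floor c⁻¹)) :
    ∃ C : ℝ, 0 < C ∧
      ∀ (N : ℕ) (ε : ℝ), ε = ((2 : ℝ) ^ N)⁻¹ →
        (∀ t x : ℝ, c * ε ≤ max (Real.sqrt |t|) |x| →
          |x| ^ (m : ℝ) *
            |iteratedDeriv k ((dDerivR b ε)^[j] (PeKer a ε (fun y => ψ y) t)) x| ≤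
            C * (max (Real.sqrt |t|) ε) ^ (-1 - (j : ℝ) - (k : ℝ) + (m : ℝ))) ∧
        (∀ t x : ℝ, max (Real.sqrt |t|) |x| < c * ε →
          |iteratedDeriv k ((dDerivR b ε)^[j] (PeKer a ε (fun y => ψ y) t)) x| ≤
            C * (max (Real.sqrt |t|) ε) ^ (-1 - (j : ℝ) - (k : ℝ))) := by
  obtain ⟨C1, hC1, h1⟩ := unified a ha_symm ha0 ha2 ha_four b hb0 ψ hψFT j k m
  obtain ⟨C2, hC2, h2⟩ := unified a ha_symm ha0 ha2 ha_four b hb0 ψ hψFT j k 0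
  refine ⟨C1 + C2 + 1, by positivity, fun N ε hε => ?_⟩
  have hε0 : 0 < ε := by rw [hε]; positivity
  refine ⟨fun t x _ => ?_, fun t x _ => ?_⟩
  · rw [Real.rpow_natCast]
    refine (h1 ε hε0 t x).trans ?_
    gcongr
    linarith
  · have := h2 ε hε0 t x
    simp only [pow_zero, one_mul, Nat.cast_zero, add_zero] at this
    refine this.trans ?_
    gcongr
    linarith
end
end
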